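/- Fullerenes have no 4-belts. -/

import Mathlib

open Set

noncomputable section

/-- The ambient space `ℝ³`. -/
abbrev E3 := EuclideanSpace ℝ (Fin 3)

/-- The cyclic successor in `Fin k`. -/
def nxt {k : ℕ} (i : Fin k) : Fin k := ⟨(i.1 + 1) % k, Nat.mod_lt _ i.pos⟩

/-- The cyclic predecessor in `Fin k`. -/
def prv {k : ℕ} (i : Fin k) : Fin k := ⟨(i.1 + (k - 1)) % k, Nat.mod_lt _ i.pos⟩

/-- A convex polytope in `ℝ³`: the convex hull of a finite set of points. -/
def IsPolytope (P : Set E3) : Prop := ∃ V : Finset E3, P = convexHull ℝ (V : Set E3)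

/-- The dimension of a subset of `ℝ³` (the dimension of its affine hull). -/
def setDim (A : Set E3) : ℕ := Module.finrank ℝ ↥(vectorSpan ℝ A)

/-- A face of a polytope: a nonempty closed convex extreme subset. -/
def IsFaceOf (F P : Set E3) : Prop :=
  F.Nonempty ∧ IsClosed F ∧ Convex ℝ F ∧ IsExtreme ℝ P F

/-- A facet: a `2`-dimensional face. -/
def IsFacetOf (F P : Set E3) : Prop := IsFaceOf F P ∧ setDim F = 2

/-- An edge: a `1`-dimensional face. -/
def IsEdgeOf (F P : Set E3) : Prop := IsFaceOf F P ∧ setDim F = 1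

/-- A vertex: a point whose singleton is a face. -/
def IsVertexOf (v : E3) (P : Set E3) : Prop := IsFaceOf {v} P

/-- The set of facets of `P`. -/
def facets (P : Set E3) : Set (Set E3) := {F | IsFacetOf F P}

/-- A simple 3-polytope: a 3-dimensional convex polytope each of whose vertices
is contained in exactly 3 facets. -/
def IsSimplePolytope3 (P : Set E3) : Prop :=
  IsPolytope P ∧ setDim P = 3 ∧
    ∀ v : E3, IsVertexOf v P → {F | IsFacetOf F P ∧ v ∈ F}.ncard = 3

/-- The number of edges of a facet `F` of `P`. -/
def facetEdges (P F : Set E3) : ℕ := {e | IsEdgeOf e P ∧ e ⊆ F}.ncard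

/-- `pVec P k` is the number of `k`-gonal facets of `P`. -/
def pVec (P : Set E3) (k : ℕ) : ℕ := {F | IsFacetOf F P ∧ facetEdges P F = k}.ncard

/-- A (mathematical) fullerene: a simple 3-polytope with all facets pentagons
and hexagons. -/
def IsFullerene (P : Set E3) : Prop :=
  IsSimplePolytope3 P ∧ ∀ F, IsFacetOf F P → facetEdges P F = 5 ∨ facetEdges P F = 6

/-- A `k`-loop in `P` (`k ≥ 2`): a cyclic sequence of facets in which
(cyclically) consecutive facets intersect in an edge; a `1`-loop is a single facet. -/
def IsLoop (P : Set E3) {k : ℕ} (L : Fin k → Set E3) : Prop :=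
  0 < k ∧ (∀ i, IsFacetOf (L i) P) ∧ (2 ≤ k → ∀ i, IsEdgeOf (L i ∩ L (nxt i)) P)

/-- A simple loop: a loop with pairwise different facets. -/
def IsSimpleLoop (P : Set E3) {k : ℕ} (L : Fin k → Set E3) : Prop :=
  IsLoop P L ∧ Function.Injective L

/-- A `k`-belt (`k ≥ 3`): a `k`-loop such that for `k = 3` the three facets have empty
total intersection, and for `k ≥ 4` two facets intersect iff they are cyclically successive. -/
def IsBelt (P : Set E3) {k : ℕ} (L : Fin k → Set E3) : Prop :=
  3 ≤ k ∧ IsLoop P L ∧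
    (k = 3 → ∀ i, L i ∩ L (nxt i) ∩ L (nxt (nxt i)) = ∅) ∧
    (4 ≤ k → ∀ p q, p ≠ q → ((L p ∩ L q).Nonempty ↔ q = nxt p ∨ p = nxt q))

/-- A flag 3-polytope: a simple 3-polytope different from the tetrahedron
(i.e. not having exactly 4 facets) without 3-belts. -/
def IsFlag3Polytope (P : Set E3) : Prop :=
  IsSimplePolytope3 P ∧ (facets P).ncard ≠ 4 ∧ ∀ B : Fin 3 → Set E3, ¬ IsBelt P B

/-- `γ` is the simple edge-cycle of `P` traced by the cyclically ordered distinct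
vertices `v 0, …, v (n-1)` (`n ≥ 3`), consecutive ones joined by edges of `P`. -/
def IsSimpleEdgeCycleVia (P γ : Set E3) {n : ℕ} (v : Fin n → E3) : Prop :=
  3 ≤ n ∧ Function.Injective v ∧ (∀ i, IsVertexOf (v i) P) ∧
    (∀ i, IsEdgeOf (segment ℝ (v i) (v (nxt i))) P) ∧
    γ = ⋃ i, segment ℝ (v i) (v (nxt i))

/-- A simple edge-cycle in the graph of `P`. -/
def IsSimpleEdgeCycle (P γ : Set E3) : Prop :=
  ∃ (n : ℕ) (v : Fin n → E3), IsSimpleEdgeCycleVia P γ v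

/-- `C` is a connected component of the set `A`. -/
def IsCompOf (C A : Set E3) : Prop := ∃ x ∈ A, C = connectedComponentIn A x

/-- The loop `L` is obtained by walking round the simple edge-cycle `γ` inside the
connected component `C` of `∂P ∖ γ`: the facets of `L` lie on the side `C`, and the
edges of `γ`, in cyclic order, lie in the facets of `L` in cyclic order (the loop
index advancing exactly when the facet changes, and making exactly one turn). -/
def WalksRound (P γ C : Set E3) {k : ℕ} (L : Fin k → Set E3) : Prop :=
  IsLoop P L ∧ (∀ i, intrinsicInterior ℝ (L i) ⊆ C) ∧
    ∃ (n : ℕ) (v : Fin n → E3) (φ : Fin n → Fin k),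
      IsSimpleEdgeCycleVia P γ v ∧
      (∀ i, segment ℝ (v i) (v (nxt i)) ⊆ L (φ i)) ∧
      (∀ i, φ (nxt i) = φ i ∨ φ (nxt i) = nxt (φ i)) ∧
      Function.Surjective φ ∧
      (2 ≤ k → (Finset.univ.filter (fun i : Fin n => φ (nxt i) ≠ φ i)).card = k)

/-- Two loops border each other: they are obtained by walking round the same simple
edge-cycle `γ` in the two different connected components of `∂P ∖ γ`. -/
def Borders (P : Set E3) {k₁ k₂ : ℕ} (L₁ : Fin k₁ → Set E3) (L₂ : Fin k₂ → Set E3) : Prop :=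
  ∃ γ C₁ C₂ : Set E3, IsCompOf C₁ (frontier P \ γ) ∧ IsCompOf C₂ (frontier P \ γ) ∧
    C₁ ≠ C₂ ∧ WalksRound P γ C₁ L₁ ∧ WalksRound P γ C₂ L₂

/-- A loop surrounds the facet `F` if it borders the `1`-loop `(F)`. -/
def Surrounds (P : Set E3) {k : ℕ} (L : Fin k → Set E3) (F : Set E3) : Prop :=
  IsFacetOf F P ∧ Borders P L (fun _ : Fin 1 => F)

/-- The number of edges of `P` lying in the facet `F` and in the set `γ`. -/
def edgesInCommon (P F γ : Set E3) : ℕ := {e | IsEdgeOf e P ∧ e ⊆ F ∧ e ⊆ γ}.ncard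
/-- A simple 3-polytope all of whose facets are pentagons and hexagons except for
at most one exceptional facet, which is a quadrangle or a heptagon. -/
def IsAlmostFullerene (P : Set E3) : Prop :=
  IsSimplePolytope3 P ∧
    (∀ F, IsFacetOf F P → facetEdges P F ∈ ({4, 5, 6, 7} : Set ℕ)) ∧
    {F | IsFacetOf F P ∧ (facetEdges P F = 4 ∨ facetEdges P F = 7)}.ncard ≤ 1

/-- The (combinatorial) dodecahedron: a simple 3-polytope with all facets pentagons. -/
def IsDodecahedron (P : Set E3) : Prop :=
  IsSimplePolytope3 P ∧ ∀ F, IsFacetOf F P → facetEdges P F = 5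

/-- `e` and `e'` are opposite edges of the hexagonal facet `H`: they are disjoint and no
edge of `H` meets both of them. -/
def OppositeEdges (P H e e' : Set E3) : Prop :=
  IsEdgeOf e P ∧ IsEdgeOf e' P ∧ e ⊆ H ∧ e' ⊆ H ∧ e ∩ e' = ∅ ∧
    ∀ e'', IsEdgeOf e'' P → e'' ⊆ H → (e'' ∩ e).Nonempty → e'' ≠ e → e'' ∩ e' = ∅

/-- A cap: a pentagonal facet `F₀` together with a surrounding 5-belt of pentagons. -/
def IsCapOf (P F₀ : Set E3) (L : Fin 5 → Set E3) : Prop :=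
  IsFacetOf F₀ P ∧ facetEdges P F₀ = 5 ∧ (∀ i, facetEdges P (L i) = 5) ∧
    IsBelt P L ∧ Surrounds P L F₀

/-- The number of 5-belts of `P` (counted as sets of facets). -/
def fiveBeltCount (P : Set E3) : ℕ :=
  {S : Set (Set E3) | ∃ B : Fin 5 → Set E3, IsBelt P B ∧ S = Set.range B}.ncard

/-- The structure of the `k`-th fullerene of Family I: two caps separated by `k`
hexagonal 5-belts, each bordering the next (for `k = 0` the caps border each other,
giving the dodecahedron). -/
def FamilyI (P : Set E3) (k : ℕ) : Prop :=
  ∃ (F₀ F₀' : Set E3) (L L' : Fin 5 → Set E3) (B : ℕ → Fin 5 → Set E3),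
    IsCapOf P F₀ L ∧ IsCapOf P F₀' L' ∧
    (∀ i < k, IsBelt P (B i) ∧ ∀ j, facetEdges P (B i j) = 6) ∧
    (∀ i, i + 1 < k → Borders P (B i) (B (i + 1))) ∧
    (0 < k → Borders P L (B 0) ∧ Borders P (B (k - 1)) L') ∧
    (k = 0 → Borders P L L') ∧
    facets P = {F₀, F₀'} ∪ Set.range L ∪ Set.range L' ∪ ⋃ i ∈ Set.Iio k, Set.range (B i)

/-- `P` is obtained from `Q` by an `(s,k;t₀,t₁)`-truncation with new edge `Enew`:
`P` is cut off from `Q` by a halfspace `{f ≤ c}` whose boundary plane crosses exactly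
two edges `E₀ ≠ E₁` of a `k`-gonal facet `F` of `Q`, cutting off exactly `s` vertices,
all belonging to `F`; `G₀` and `G₁` are the facets meeting `F` along `E₀` and `E₁`, and
they are `t₀`- and `t₁`-gons; `Enew` is the new edge dividing `F`. -/
def IsTruncation (s k t₀ t₁ : ℕ) (Q P Enew : Set E3) : Prop :=
  IsSimplePolytope3 Q ∧ IsSimplePolytope3 P ∧
    ∃ (F E₀ E₁ G₀ G₁ : Set E3) (f : E3 →ₗ[ℝ] ℝ) (c : ℝ),
      IsFacetOf F Q ∧ facetEdges Q F = k ∧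
      IsEdgeOf E₀ Q ∧ IsEdgeOf E₁ Q ∧ E₀ ≠ E₁ ∧ E₀ ⊆ F ∧ E₁ ⊆ F ∧
      IsFacetOf G₀ Q ∧ IsFacetOf G₁ Q ∧ G₀ ≠ F ∧ G₁ ≠ F ∧ E₀ ⊆ G₀ ∧ E₁ ⊆ G₁ ∧
      facetEdges Q G₀ = t₀ ∧ facetEdges Q G₁ = t₁ ∧
      P = Q ∩ {x | f x ≤ c} ∧
      (∀ e, IsEdgeOf e Q → (∃ x ∈ e, c < f x) → (∃ x ∈ e, f x < c) → e = E₀ ∨ e = E₁) ∧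
      (∃ x ∈ E₀, c < f x) ∧ (∃ x ∈ E₀, f x < c) ∧
      (∃ x ∈ E₁, c < f x) ∧ (∃ x ∈ E₁, f x < c) ∧
      (∀ v, IsVertexOf v Q → f v ≠ c) ∧
      {v | IsVertexOf v Q ∧ c < f v}.ncard = s ∧
      (∀ v, IsVertexOf v Q → c < f v → v ∈ F) ∧
      Enew = F ∩ {x | f x = c}

/-- Combinatorial equivalence of polytopes: an inclusion-preserving bijection
between the sets of faces. -/
def CombEquiv (P Q : Set E3) : Prop :=
  ∃ φ : {A : Set E3 // IsFaceOf A P} ≃ {A : Set E3 // IsFaceOf A Q},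
    ∀ A B : {A : Set E3 // IsFaceOf A P}, A.1 ⊆ B.1 ↔ (φ A).1 ⊆ (φ B).1

/-- Combinatorial equivalence sending the face `Ep` of `P` to the face `Eq` of `Q`. -/
def CombEquivMapping (P Q Ep Eq : Set E3) : Prop :=
  ∃ φ : {A : Set E3 // IsFaceOf A P} ≃ {A : Set E3 // IsFaceOf A Q},
    (∀ A B : {A : Set E3 // IsFaceOf A P}, A.1 ⊆ B.1 ↔ (φ A).1 ⊆ (φ B).1) ∧
    ∀ h : IsFaceOf Ep P, ((φ ⟨Ep, h⟩) : {A : Set E3 // IsFaceOf A Q}).1 = Eq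

/-- The straightening of `P` along the edge `E` is defined: `P` is combinatorially
obtained from some simple 3-polytope `Q` by an `(s,k)`-truncation whose new edge
corresponds to `E`. -/
def StraighteningDefined (P E : Set E3) : Prop :=
  ∃ (s k t₀ t₁ : ℕ) (Q P₁ E₁ : Set E3),
    IsTruncation s k t₀ t₁ Q P₁ E₁ ∧ CombEquivMapping P P₁ E E₁

/-- `P` is obtained from `Q` by one of the truncations
`(1;4,5)`, `(1;5,5)`, `(2,6;4,5)`, `(2,6;5,5)`, `(2,6;5,6)`, `(2,7;5,5)`, `(2,7;5,6)`. -/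
def FullereneStep (Q P : Set E3) : Prop :=
  ∃ (s k t₀ t₁ : ℕ) (Enew : Set E3), IsTruncation s k t₀ t₁ Q P Enew ∧
    ((s = 1 ∧ (({t₀, t₁} : Finset ℕ) = {4, 5} ∨ ({t₀, t₁} : Finset ℕ) = {5, 5})) ∨
     (s = 2 ∧ k = 6 ∧ (({t₀, t₁} : Finset ℕ) = {4, 5} ∨ ({t₀, t₁} : Finset ℕ) = {5, 5} ∨
        ({t₀, t₁} : Finset ℕ) = {5, 6})) ∨
     (s = 2 ∧ k = 7 ∧ (({t₀, t₁} : Finset ℕ) = {5, 5} ∨ ({t₀, t₁} : Finset ℕ) = {5, 6})))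


section
open scoped Classical


/-- Combinatorial data of the boundary of a simple fullerene polytope with a generic height. -/
structure Cell (V E F : Type) [Fintype V] [Fintype E] [Fintype F] where
  VE : V → E → Prop
  EF : E → F → Prop
  ht : V → ℝ
  inj : Function.Injective ht
  ve2 : ∀ e, (Finset.univ.filter fun v => VE v e).card = 2
  ve3 : ∀ v, (Finset.univ.filter fun e => VE v e).card = 3
  ef2 : ∀ e, (Finset.univ.filter fun f => EF e f).card = 2
  vf2 : ∀ v f, (∃ e, VE v e ∧ EF e f) → (Finset.univ.filter fun e => VE v e ∧ EF e f).card = 2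
  fne : ∀ f, ∃ v e, VE v e ∧ EF e f
  fmin : ∀ f v v', (∃ e, VE v e ∧ EF e f) → (∃ e, VE v' e ∧ EF e f) →
    (∀ e, VE v e → EF e f → ∀ w, VE w e → ht v ≤ ht w) →
    (∀ e, VE v' e → EF e f → ∀ w, VE w e → ht v' ≤ ht w) → v = v'
  fmax : ∀ f v v', (∃ e, VE v e ∧ EF e f) → (∃ e, VE v' e ∧ EF e f) →
    (∀ e, VE v e → EF e f → ∀ w, VE w e → ht w ≤ ht v) →
    (∀ e, VE v' e → EF e f → ∀ w, VE w e → ht w ≤ ht v') → v = v'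
  vne : Nonempty V
  vmin : ∀ v v',
    (∀ e, VE v e → ∀ w, VE w e → ht v ≤ ht w) →
    (∀ e, VE v' e → ∀ w, VE w e → ht v' ≤ ht w) → v = v'
  vmax : ∀ v v',
    (∀ e, VE v e → ∀ w, VE w e → ht w ≤ ht v) →
    (∀ e, VE v' e → ∀ w, VE w e → ht w ≤ ht v') → v = v'
  f56 : ∀ f, (Finset.univ.filter fun e => EF e f).card = 5 ∨
    (Finset.univ.filter fun e => EF e f).card = 6

namespace Cell
variable {V E F : Type} [Fintype V] [Fintype E] [Fintype F] (C : Cell V E F)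

def VF (v : V) (f : F) : Prop := ∃ e, C.VE v e ∧ C.EF e f

lemma ends (e : E) : ∃ u w, u ≠ w ∧ ∀ v, C.VE v e ↔ v = u ∨ v = w := by
  obtain ⟨u, w, h, h2⟩ := Finset.card_eq_two.1 (C.ve2 e)
  refine ⟨u, w, h, fun v => ?_⟩
  have := congrArg (v ∈ ·) h2
  simpa using this

lemma facs (e : E) : ∃ f g, f ≠ g ∧ ∀ x, C.EF e x ↔ x = f ∨ x = g := by
  obtain ⟨u, w, h, h2⟩ := Finset.card_eq_two.1 (C.ef2 e)
  refine ⟨u, w, h, fun v => ?_⟩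
  have := congrArg (v ∈ ·) h2
  simpa using this

lemma edges3 (v : V) : ∃ a b c, a ≠ b ∧ a ≠ c ∧ b ≠ c ∧ ∀ e, C.VE v e ↔ e = a ∨ e = b ∨ e = c := by
  obtain ⟨a, b, c, h1, h2, h3, h⟩ := Finset.card_eq_three.1 (C.ve3 v)
  refine ⟨a, b, c, h1, h2, h3, fun e => ?_⟩
  have := congrArg (e ∈ ·) h
  simpa using this

lemma edges2 {v : V} {f : F} (hv : C.VF v f) :
    ∃ a b, a ≠ b ∧ ∀ e, (C.VE v e ∧ C.EF e f) ↔ e = a ∨ e = b := by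
  obtain ⟨u, w, h, h2⟩ := Finset.card_eq_two.1 (C.vf2 v f hv)
  refine ⟨u, w, h, fun e => ?_⟩
  have := congrArg (e ∈ ·) h2
  simpa using this

/-- edges inside `A` -/
def EA (A : Finset V) : Finset E := Finset.univ.filter fun e => ∀ v, C.VE v e → v ∈ A
/-- cut edges -/
def cut (A : Finset V) : Finset E :=
  Finset.univ.filter fun e => (∃ v ∈ A, C.VE v e) ∧ ∃ v, v ∉ A ∧ C.VE v e
/-- facets inside `A` -/
def FA (A : Finset V) : Finset F := Finset.univ.filter fun f => ∀ v, C.VF v f → v ∈ A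
/-- crossing facets -/
def FX (A : Finset V) : Finset F :=
  Finset.univ.filter fun f => (∃ v ∈ A, C.VF v f) ∧ ∃ v, v ∉ A ∧ C.VF v f
def fe (f : F) : Finset E := Finset.univ.filter fun e => C.EF e f
def alpha (A : Finset V) : ℕ := ∑ f ∈ C.FX A, ((C.EA A).filter fun e => C.EF e f).card

lemma dc {α β : Type} (s : Finset α) (t : Finset β) (r : α → β → Prop) :
    ∑ a ∈ s, (t.filter fun b => r a b).card = ∑ b ∈ t, (s.filter fun a => r a b).card :=
  Finset.sum_card_bipartiteAbove_eq_sum_card_bipartiteBelow r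

lemma cut_compl (A : Finset V) : C.cut Aᶜ = C.cut A := by
  ext e; simp [cut]; tauto

lemma FX_compl (A : Finset V) : C.FX Aᶜ = C.FX A := by
  ext e; simp [FX]; tauto

lemma count_VE (A : Finset V) (T : Finset E) :
    ∑ v ∈ A, (T.filter fun e => C.VE v e).card =
      2 * (T.filter fun e => e ∈ C.EA A).card + (T.filter fun e => e ∈ C.cut A).card := by
  rw [dc, Finset.card_filter, Finset.card_filter, Finset.mul_sum, ← Finset.sum_add_distrib]
  refine Finset.sum_congr rfl fun e _ => ?_
  obtain ⟨u, w, huw, h⟩ := C.ends e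
  have h1 : (A.filter fun v => C.VE v e) = ({u, w} : Finset V).filter (· ∈ A) := by
    ext v; simp [h]; tauto
  have hE : e ∈ C.EA A ↔ u ∈ A ∧ w ∈ A := by
    simp [EA, h]
  have hX : e ∈ C.cut A ↔ (u ∈ A ∧ w ∉ A) ∨ (w ∈ A ∧ u ∉ A) := by
    simp only [cut, Finset.mem_filter, Finset.mem_univ, true_and, h]
    constructor
    · rintro ⟨⟨v, hv, rfl | rfl⟩, v', hv', rfl | rfl⟩ <;> tauto
    · rintro (⟨h1, h2⟩ | ⟨h1, h2⟩)
      · exact ⟨⟨u, h1, by simp⟩, w, h2, by simp⟩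
      · exact ⟨⟨w, h1, by simp⟩, u, h2, by simp⟩
  rw [h1]
  simp only [hE, hX]
  by_cases hu : u ∈ A <;> by_cases hw : w ∈ A <;> simp [Finset.filter_insert, Finset.filter_singleton, hu, hw, huw]

lemma count1 (A : Finset V) : 2 * (C.EA A).card + (C.cut A).card = 3 * A.card := by
  have := C.count_VE A Finset.univ
  simp only [C.ve3, Finset.sum_const, smul_eq_mul, Finset.filter_mem_eq_inter,
    Finset.univ_inter] at this
  omega

lemma edge_tri (A : Finset V) (e : E) : e ∈ C.EA A ∧ e ∉ C.cut A ∧ e ∉ C.EA Aᶜ ∨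
    e ∉ C.EA A ∧ e ∈ C.cut A ∧ e ∉ C.EA Aᶜ ∨ e ∉ C.EA A ∧ e ∉ C.cut A ∧ e ∈ C.EA Aᶜ := by
  obtain ⟨u, w, huw, h⟩ := C.ends e
  have := h u; have := h w
  by_cases hu : u ∈ A <;> by_cases hw : w ∈ A <;> simp [EA, cut, h] <;> grind

lemma fac_tri (A : Finset V) (f : F) : f ∈ C.FA A ∧ f ∉ C.FX A ∧ f ∉ C.FA Aᶜ ∨
    f ∉ C.FA A ∧ f ∈ C.FX A ∧ f ∉ C.FA Aᶜ ∨ f ∉ C.FA A ∧ f ∉ C.FX A ∧ f ∈ C.FA Aᶜ := by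
  obtain ⟨v, hv⟩ := C.fne f
  have hv : C.VF v f := hv
  simp only [FA, FX, Finset.mem_filter, Finset.mem_univ, true_and, Finset.mem_compl]
  by_cases h : v ∈ A
  · by_cases h2 : ∃ v, v ∉ A ∧ C.VF v f <;> grind
  · by_cases h2 : ∃ v, v ∈ A ∧ C.VF v f <;> grind

lemma card_tri {α : Type} [Fintype α] (a b c : Finset α) (T : Finset α)
    (h : ∀ x, x ∈ a ∧ x ∉ b ∧ x ∉ c ∨ x ∉ a ∧ x ∈ b ∧ x ∉ c ∨ x ∉ a ∧ x ∉ b ∧ x ∈ c) :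
    T.card = (T.filter (· ∈ a)).card + (T.filter (· ∈ b)).card + (T.filter (· ∈ c)).card := by
  rw [Finset.card_filter, Finset.card_filter, Finset.card_filter, ← Finset.sum_add_distrib,
    ← Finset.sum_add_distrib, Finset.card_eq_sum_ones]
  refine Finset.sum_congr rfl fun x _ => ?_
  rcases h x with h | h | h <;> simp [h]

lemma sum_tri {α : Type} [Fintype α] (a b c : Finset α) (g : α → ℕ)
    (h : ∀ x, x ∈ a ∧ x ∉ b ∧ x ∉ c ∨ x ∉ a ∧ x ∈ b ∧ x ∉ c ∨ x ∉ a ∧ x ∉ b ∧ x ∈ c) :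
    ∑ x, g x = ∑ x ∈ a, g x + ∑ x ∈ b, g x + ∑ x ∈ c, g x := by
  have e : ∀ s : Finset α, ∑ x ∈ s, g x = ∑ x, if x ∈ s then g x else 0 := by
    intro s; simp
  rw [e a, e b, e c, ← Finset.sum_add_distrib, ← Finset.sum_add_distrib]
  refine Finset.sum_congr rfl fun x _ => ?_
  rcases h x with h | h | h <;> simp [h]

lemma countE (A : Finset V) :
    Fintype.card E = (C.EA A).card + (C.cut A).card + (C.EA Aᶜ).card := by
  have := card_tri (C.EA A) (C.cut A) (C.EA Aᶜ) Finset.univ (C.edge_tri A)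
  simpa [Finset.filter_mem_eq_inter] using this

lemma countF (A : Finset V) :
    Fintype.card F = (C.FA A).card + (C.FX A).card + (C.FA Aᶜ).card := by
  have := card_tri (C.FA A) (C.FX A) (C.FA Aᶜ) Finset.univ (C.fac_tri A)
  simpa [Finset.filter_mem_eq_inter] using this

lemma count2 (A : Finset V) :
    ∑ f ∈ C.FA A, (C.fe f).card + C.alpha A = 2 * (C.EA A).card := by
  have h := dc (C.EA A) (Finset.univ : Finset F) C.EF
  simp only [C.ef2, Finset.sum_const, smul_eq_mul] at h
  rw [sum_tri (C.FA A) (C.FX A) (C.FA Aᶜ) _ (C.fac_tri A)] at h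
  have h3 : ∑ f ∈ C.FA Aᶜ, ((C.EA A).filter fun e => C.EF e f).card = 0 := by
    refine Finset.sum_eq_zero fun f hf => ?_
    rw [Finset.card_eq_zero, Finset.filter_eq_empty_iff]
    intro e he hef
    obtain ⟨u, w, huw, h⟩ := C.ends e
    simp only [EA, FA, Finset.mem_filter, Finset.mem_univ, true_and, Finset.mem_compl] at he hf
    exact hf u ⟨e, (h u).2 (Or.inl rfl), hef⟩ (he u ((h u).2 (Or.inl rfl)))
  have h1 : ∑ f ∈ C.FA A, ((C.EA A).filter fun e => C.EF e f).card =
      ∑ f ∈ C.FA A, (C.fe f).card := by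
    refine Finset.sum_congr rfl fun f hf => ?_
    congr 1
    ext e
    simp only [EA, FA, fe, Finset.mem_filter, Finset.mem_univ, true_and] at hf ⊢
    exact ⟨fun h => h.2, fun h => ⟨fun v hv => hf v ⟨e, hv, h⟩, h⟩⟩
  rw [h1, h3] at h
  simp only [alpha]; omega

lemma cut_FX {A : Finset V} {e : E} {f : F} (he : e ∈ C.cut A) (h : C.EF e f) : f ∈ C.FX A := by
  simp only [cut, FX, Finset.mem_filter, Finset.mem_univ, true_and] at *
  obtain ⟨⟨v, hv, h1⟩, w, hw, h2⟩ := he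
  exact ⟨⟨v, hv, e, h1, h⟩, w, hw, e, h2, h⟩

lemma sum_cut (A : Finset V) :
    ∑ f ∈ C.FX A, ((C.cut A).filter fun e => C.EF e f).card = 2 * (C.cut A).card := by
  have h := dc (C.cut A) (Finset.univ : Finset F) C.EF
  simp only [C.ef2, Finset.sum_const, smul_eq_mul] at h
  rw [mul_comm, h]
  refine Finset.sum_subset (Finset.subset_univ _) fun f _ hf => ?_
  rw [Finset.card_eq_zero, Finset.filter_eq_empty_iff]
  exact fun e he hef => hf (C.cut_FX he hef)

lemma filter_swap {α : Type} (s : Finset α) [Fintype α] (p : α → Prop) :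
    (Finset.univ.filter p).filter (· ∈ s) = s.filter p := by
  ext; simp; tauto

lemma count3 (A : Finset V) :
    ∑ f ∈ C.FX A, (C.fe f).card = C.alpha A + C.alpha Aᶜ + 2 * (C.cut A).card := by
  rw [← sum_cut, alpha, alpha, FX_compl, ← Finset.sum_add_distrib, ← Finset.sum_add_distrib]
  refine Finset.sum_congr rfl fun f hf => ?_
  rw [card_tri (C.EA A) (C.cut A) (C.EA Aᶜ) (C.fe f) (C.edge_tri A)]
  simp only [fe, filter_swap]
  omega

/-- a set of vertices in a facet closed under its edges is everything -/
lemma facet_conn (f : F) (A : Finset V) (h : ∀ e ∈ C.cut A, ¬ C.EF e f)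
    (h1 : ∃ v ∈ A, C.VF v f) (h2 : ∃ v, v ∉ A ∧ C.VF v f) : False := by
  have key : ∀ B : Finset V, (∀ e ∈ C.cut B, ¬ C.EF e f) → (∃ v ∈ B, C.VF v f) →
      ∃ v ∈ B, C.VF v f ∧ ∀ e, C.VE v e → C.EF e f → ∀ w, C.VE w e → C.ht v ≤ C.ht w := by
    intro B hB ⟨v, hv, hvf⟩
    obtain ⟨m, hm, hmin⟩ := Finset.exists_min_image (B.filter fun v => C.VF v f) C.ht
      ⟨v, by simp [hv, hvf]⟩
    simp only [Finset.mem_filter] at hm hmin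
    refine ⟨m, hm.1, hm.2, fun e he hef w hw => hmin w ⟨?_, e, hw, hef⟩⟩
    by_contra hwB
    exact hB e (by simp only [cut, Finset.mem_filter, Finset.mem_univ, true_and]; exact ⟨⟨m, hm.1, he⟩, w, hwB, hw⟩) hef
  obtain ⟨a, ha, haf, ham⟩ := key A h h1
  obtain ⟨b, hb, hbf, hbm⟩ := key Aᶜ (by rwa [cut_compl]) (by simpa using h2)
  have := C.fmin f a b haf hbf ham hbm
  subst this
  simp at hb; exact hb ha

lemma graph_conn (A : Finset V) (h : C.cut A = ∅) (h1 : A.Nonempty) (h2 : Aᶜ.Nonempty) : False := by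
  have key : ∀ B : Finset V, C.cut B = ∅ → B.Nonempty →
      ∃ v ∈ B, ∀ e, C.VE v e → ∀ w, C.VE w e → C.ht v ≤ C.ht w := by
    intro B hB hBn
    obtain ⟨m, hm, hmin⟩ := Finset.exists_min_image B C.ht hBn
    refine ⟨m, hm, fun e he w hw => hmin w ?_⟩
    by_contra hwB
    have : e ∈ C.cut B := by
      simp only [cut, Finset.mem_filter, Finset.mem_univ, true_and]; exact ⟨⟨m, hm, he⟩, w, hwB, hw⟩
    simp [hB] at this
  obtain ⟨a, ha, ham⟩ := key A h h1
  obtain ⟨b, hb, hbm⟩ := key Aᶜ (by rwa [cut_compl]) h2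
  have := C.vmin a b ham hbm
  subst this
  simp at hb; exact hb ha

lemma two_le_cut {A : Finset V} {f : F} (hf : f ∈ C.FX A) :
    2 ≤ ((C.cut A).filter fun e => C.EF e f).card := by
  have h := C.count_VE A (C.fe f)
  have hs : ∑ v ∈ A, ((C.fe f).filter fun e => C.VE v e).card =
      2 * (A.filter fun v => C.VF v f).card := by
    rw [Finset.card_filter, Finset.mul_sum]
    refine Finset.sum_congr rfl fun v _ => ?_
    by_cases hv : C.VF v f
    · rw [if_pos hv, ← C.vf2 v f hv, mul_one]
      congr 1; ext e; simp [fe]; tauto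
    · rw [if_neg hv, mul_zero, Finset.card_eq_zero, Finset.filter_eq_empty_iff]
      intro e he hve
      exact hv ⟨e, hve, by simpa [fe] using he⟩
  have hne : 0 < ((C.cut A).filter fun e => C.EF e f).card := by
    rw [Nat.pos_iff_ne_zero]
    intro h0
    rw [Finset.card_eq_zero, Finset.filter_eq_empty_iff] at h0
    simp only [FX, Finset.mem_filter, Finset.mem_univ, true_and] at hf
    exact C.facet_conn f A (fun e he => h0 he) hf.1 hf.2
  have : ((C.fe f).filter fun e => e ∈ C.cut A) = (C.cut A).filter fun e => C.EF e f := by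
    rw [fe, filter_swap]
  rw [this, hs] at h
  omega

lemma FX_le (A : Finset V) : (C.FX A).card ≤ (C.cut A).card := by
  have h := Finset.card_nsmul_le_sum (C.FX A) _ 2 (fun f hf => C.two_le_cut hf)
  rw [sum_cut, smul_eq_mul] at h
  omega

end Cell
namespace Cell
variable {V E F : Type} [Fintype V] [Fintype E] [Fintype F] (C : Cell V E F)

lemma share {v : V} {f g : F} (hf : C.VF v f) (hg : C.VF v g) :
    ∃ e, C.VE v e ∧ C.EF e f ∧ C.EF e g := by
  obtain ⟨a, b, c, h1, h2, h3, h⟩ := C.edges3 v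
  obtain ⟨p, q, hpq, hp⟩ := C.edges2 hf
  obtain ⟨r, s, hrs, hr⟩ := C.edges2 hg
  have hp1 := (hp p).2 (Or.inl rfl)
  have hp2 := (hp q).2 (Or.inr rfl)
  have hr1 := (hr r).2 (Or.inl rfl)
  have hr2 := (hr s).2 (Or.inr rfl)
  have e1 := (h p).1 hp1.1
  have e2 := (h q).1 hp2.1
  have e3 := (h r).1 hr1.1
  have e4 := (h s).1 hr2.1
  have : p = r ∨ p = s ∨ q = r ∨ q = s := by grind
  rcases this with rfl | rfl | rfl | rfl
  · exact ⟨_, hp1.1, hp1.2, hr1.2⟩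
  · exact ⟨_, hp1.1, hp1.2, hr2.2⟩
  · exact ⟨_, hp2.1, hp2.2, hr1.2⟩
  · exact ⟨_, hp2.1, hp2.2, hr2.2⟩

lemma dual_conn {α : Type} (y : F → α) (h : ∀ e f g, C.EF e f → C.EF e g → y f = y g) (f g : F) :
    y f = y g := by
  set S : Finset V := Finset.univ.filter fun v => ∃ f', C.VF v f' ∧ y f' = y f with hS
  have hat : ∀ v f' g', C.VF v f' → C.VF v g' → y f' = y g' := fun v f' g' h1 h2 => by
    obtain ⟨e, _, h3, h4⟩ := C.share h1 h2
    exact h e _ _ h3 h4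
  by_contra hne
  refine C.graph_conn S ?_ ?_ ?_
  · rw [Finset.eq_empty_iff_forall_notMem]
    intro e he
    simp only [cut, Finset.mem_filter, Finset.mem_univ, true_and, hS] at he
    obtain ⟨⟨v, ⟨f', h1, h2⟩, h3⟩, w, h4, h5⟩ := he
    obtain ⟨f1, f2, _, hf⟩ := C.facs e
    have hf1 := (hf f1).2 (Or.inl rfl)
    exact h4 ⟨f1, ⟨e, h5, hf1⟩, by rw [← h2]; exact hat v _ _ ⟨e, h3, hf1⟩ h1⟩
  · obtain ⟨v, hv⟩ := C.fne f
    exact ⟨v, by simp only [hS, Finset.mem_filter, Finset.mem_univ, true_and]; exact ⟨f, hv, rfl⟩⟩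
  · obtain ⟨v, hv⟩ := C.fne g
    refine ⟨v, ?_⟩
    simp only [hS, Finset.mem_filter, Finset.mem_univ, true_and, Finset.mem_compl]
    rintro ⟨f', h1, h2⟩
    exact hne (by rw [← h2]; exact hat v _ _ h1 hv)

lemma local3 (v : V) : ∃ a b c p q r, a ≠ b ∧ a ≠ c ∧ b ≠ c ∧ p ≠ q ∧ p ≠ r ∧ q ≠ r ∧
    (∀ e, C.VE v e ↔ e = a ∨ e = b ∨ e = c) ∧
    (∀ x, C.EF a x ↔ x = q ∨ x = r) ∧ (∀ x, C.EF b x ↔ x = p ∨ x = r) ∧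
    (∀ x, C.EF c x ↔ x = p ∨ x = q) := by
  obtain ⟨a, b, c, h1, h2, h3, h⟩ := C.edges3 v
  have tri : ∀ x, C.VF v x → ¬ (C.EF a x ∧ C.EF b x ∧ C.EF c x) ∧
      ((C.EF a x ∧ C.EF b x) ∨ (C.EF a x ∧ C.EF c x) ∨ (C.EF b x ∧ C.EF c x)) := by
    intro x hx
    obtain ⟨s, t, hst, hh⟩ := C.edges2 hx
    simp only [h] at hh
    have := hh a; have := hh b; have := hh c; have := hh s; have := hh t
    grind
  have tri' : ∀ x, (C.EF a x ∨ C.EF b x ∨ C.EF c x) → ¬ (C.EF a x ∧ C.EF b x ∧ C.EF c x) ∧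
      ((C.EF a x ∧ C.EF b x) ∨ (C.EF a x ∧ C.EF c x) ∨ (C.EF b x ∧ C.EF c x)) := by
    intro x hx
    apply tri
    rcases hx with hx | hx | hx
    · exact ⟨a, (h a).2 (by simp), hx⟩
    · exact ⟨b, (h b).2 (by simp), hx⟩
    · exact ⟨c, (h c).2 (by simp), hx⟩
  obtain ⟨a1, a2, ha, hA⟩ := C.facs a
  obtain ⟨b1, b2, hb, hB⟩ := C.facs b
  obtain ⟨c1, c2, hc, hC⟩ := C.facs c
  simp only [hA, hB, hC] at tri'
  have t1 := tri' a1; have t2 := tri' a2; have t3 := tri' b1; have t4 := tri' b2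
  have t5 := tri' c1; have t6 := tri' c2
  have : ∃ p q r, p ≠ q ∧ p ≠ r ∧ q ≠ r ∧ ((a1 = q ∧ a2 = r) ∨ (a1 = r ∧ a2 = q)) ∧
    ((b1 = p ∧ b2 = r) ∨ (b1 = r ∧ b2 = p)) ∧ ((c1 = p ∧ c2 = q) ∨ (c1 = q ∧ c2 = p)) := by
    clear tri tri' hA hB hC h
    by_cases e1 : a1 = b1
    · refine ⟨b2, a2, a1, ?_⟩; grind
    · by_cases e2 : a1 = b2
      · refine ⟨b1, a2, a1, ?_⟩; grind
      · by_cases e3 : a2 = b1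
        · refine ⟨b2, a1, a2, ?_⟩; grind
        · refine ⟨b1, a1, a2, ?_⟩; grind
  obtain ⟨p, q, r, h4, h5, h6, h7, h8, h9⟩ := this
  refine ⟨a, b, c, p, q, r, h1, h2, h3, h4, h5, h6, h, ?_, ?_, ?_⟩
  · intro x; rw [hA]; grind
  · intro x; rw [hB]; grind
  · intro x; rw [hC]; grind

def up (v : V) (e : E) : Prop := ∀ w, C.VE w e → C.ht v ≤ C.ht w
def dn (v : V) (e : E) : Prop := ∀ w, C.VE w e → C.ht w ≤ C.ht v

lemma dn_iff {v : V} {e : E} (h : C.VE v e) : C.dn v e ↔ ¬ C.up v e := by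
  obtain ⟨u, w, huw, hh⟩ := C.ends e
  have := C.inj.ne huw
  simp only [dn, up, hh] at *
  constructor
  · intro h1 h2
    have := h1 u; have := h1 w; have := h2 u; have := h2 w
    grind
  · intro h1
    push Not at h1
    grind

lemma dcg {α β : Type} (s : Finset α) (t : Finset β) (r : α → β → Prop) [∀ a b, Decidable (r a b)] :
    ∑ a ∈ s, (t.filter fun b => r a b).card = ∑ b ∈ t, (s.filter fun a => r a b).card :=
  Finset.sum_card_bipartiteAbove_eq_sum_card_bipartiteBelow r

lemma euler (C : Cell V E F) : Fintype.card V + Fintype.card F = Fintype.card E + 2 := by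
  have hE := C.count1 Finset.univ
  have hcut : C.cut Finset.univ = ∅ := by ext; simp [cut]
  have hEA : C.EA Finset.univ = Finset.univ := by ext; simp [EA]
  rw [hcut, hEA] at hE
  simp only [Finset.card_empty, Finset.card_univ] at hE
  have hmin : ∑ v : V, (Finset.univ.filter fun f => C.VF v f ∧ ∀ e, C.VE v e → C.EF e f → C.up v e).card
      = Fintype.card F := by
    rw [dcg, Fintype.card_eq_sum_ones]
    refine Finset.sum_congr rfl fun f _ => ?_
    rw [Finset.card_eq_one]
    obtain ⟨v, hv⟩ := C.fne f
    obtain ⟨m, hm, hmin⟩ := Finset.exists_min_image (Finset.univ.filter fun v => C.VF v f) C.ht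
      ⟨v, by simp only [Finset.mem_filter, Finset.mem_univ, true_and]; exact hv⟩
    simp only [Finset.mem_filter, Finset.mem_univ, true_and] at hm hmin
    have hm2 : ∀ e, C.VE m e → C.EF e f → C.up m e := fun e _ h w hw => hmin w ⟨e, hw, h⟩
    refine ⟨m, ?_⟩
    ext w
    simp only [Finset.mem_filter, Finset.mem_univ, true_and, Finset.mem_singleton]
    constructor
    · rintro ⟨h1, h2⟩
      exact C.fmin f w m h1 hm h2 hm2
    · rintro rfl; exact ⟨hm, hm2⟩
  have hmax : ∑ v : V, (Finset.univ.filter fun f => C.VF v f ∧ ∀ e, C.VE v e → C.EF e f → C.dn v e).card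
      = Fintype.card F := by
    rw [dcg, Fintype.card_eq_sum_ones]
    refine Finset.sum_congr rfl fun f _ => ?_
    rw [Finset.card_eq_one]
    obtain ⟨v, hv⟩ := C.fne f
    obtain ⟨m, hm, hmin⟩ := Finset.exists_max_image (Finset.univ.filter fun v => C.VF v f) C.ht
      ⟨v, by simp only [Finset.mem_filter, Finset.mem_univ, true_and]; exact hv⟩
    simp only [Finset.mem_filter, Finset.mem_univ, true_and] at hm hmin
    have hm2 : ∀ e, C.VE m e → C.EF e f → C.dn m e := fun e _ h w hw => hmin w ⟨e, hw, h⟩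
    refine ⟨m, ?_⟩
    ext w
    simp only [Finset.mem_filter, Finset.mem_univ, true_and, Finset.mem_singleton]
    constructor
    · rintro ⟨h1, h2⟩
      exact C.fmax f w m h1 hm h2 hm2
    · rintro rfl; exact ⟨hm, hm2⟩
  have gmin : ∑ v : V, (if ∀ e, C.VE v e → C.up v e then 1 else 0) = 1 := by
    rw [← Finset.card_filter, Finset.card_eq_one]
    obtain ⟨m, -, hmin⟩ := Finset.exists_min_image (Finset.univ : Finset V) C.ht
      (by have := C.vne; exact Finset.univ_nonempty)
    have hm2 : ∀ e, C.VE m e → C.up m e := fun e _ w hw => hmin w (by simp)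
    refine ⟨m, ?_⟩
    ext w
    simp only [Finset.mem_filter, Finset.mem_univ, true_and, Finset.mem_singleton]
    constructor
    · intro h1
      exact C.vmin w m h1 hm2
    · rintro rfl; exact hm2
  have gmax : ∑ v : V, (if ∀ e, C.VE v e → C.dn v e then 1 else 0) = 1 := by
    rw [← Finset.card_filter, Finset.card_eq_one]
    obtain ⟨m, -, hmin⟩ := Finset.exists_max_image (Finset.univ : Finset V) C.ht
      (by have := C.vne; exact Finset.univ_nonempty)
    have hm2 : ∀ e, C.VE m e → C.dn m e := fun e _ w hw => hmin w (by simp)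
    refine ⟨m, ?_⟩
    ext w
    simp only [Finset.mem_filter, Finset.mem_univ, true_and, Finset.mem_singleton]
    constructor
    · intro h1
      exact C.vmax w m h1 hm2
    · rintro rfl; exact hm2
  have loc : ∀ v : V,
      (Finset.univ.filter fun f => C.VF v f ∧ ∀ e, C.VE v e → C.EF e f → C.up v e).card +
      (Finset.univ.filter fun f => C.VF v f ∧ ∀ e, C.VE v e → C.EF e f → C.dn v e).card =
      1 + 2 * (if ∀ e, C.VE v e → C.up v e then 1 else 0) +
        2 * (if ∀ e, C.VE v e → C.dn v e then 1 else 0) := by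
    intro v
    obtain ⟨a, b, c, p, q, r, hab, hac, hbc, hpq, hpr, hqr, h, ha, hb, hc⟩ := C.local3 v
    have da := C.dn_iff ((h a).2 (by simp))
    have db := C.dn_iff ((h b).2 (by simp))
    have dcc := C.dn_iff ((h c).2 (by simp))
    have gen : ∀ Q : E → Prop,
      (Finset.univ.filter fun f => C.VF v f ∧ ∀ e, C.VE v e → C.EF e f → Q e) =
      ({p, q, r} : Finset F).filter fun f => (f = p → Q b ∧ Q c) ∧ (f = q → Q a ∧ Q c) ∧
        (f = r → Q a ∧ Q b) := by
      intro Q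
      ext f
      simp only [VF, h, Finset.mem_filter, Finset.mem_univ, true_and, Finset.mem_insert,
        Finset.mem_singleton, forall_eq_or_imp, forall_eq, or_and_right, exists_or,
        exists_eq_left, ha, hb, hc]
      grind
    rw [gen, gen]
    simp only [h, forall_eq_or_imp, forall_eq, da, db, dcc]
    by_cases ua : C.up v a <;> by_cases ub : C.up v b <;> by_cases uc : C.up v c <;>
      simp [ua, ub, uc, Finset.filter_insert, Finset.filter_singleton, hpq, hpr, hqr, hpq.symm, hpr.symm, hqr.symm]
  have hsum := Finset.sum_congr (rfl : (Finset.univ : Finset V) = _) (fun v _ => loc v)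
  rw [Finset.sum_add_distrib, Finset.sum_add_distrib, Finset.sum_add_distrib, ← Finset.mul_sum,
    ← Finset.mul_sum, hmin, hmax, gmin, gmax] at hsum
  simp at hsum
  omega

/-! ### ranks over `ZMod 2` -/

lemma ker_le_one {n W : Type} [Fintype n] [AddCommGroup W] [Module (ZMod 2) W]
    (L : (n → ZMod 2) →ₗ[ZMod 2] W)
    (h : ∀ x, L x = 0 → x = 0 ∨ x = 1) :
    Fintype.card n ≤ Module.finrank (ZMod 2) (LinearMap.range L) + 1 := by
  have h1 := LinearMap.finrank_range_add_finrank_ker L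
  rw [Module.finrank_fintype_fun_eq_card] at h1
  have h2 : LinearMap.ker L ≤ Submodule.span (ZMod 2) {(1 : n → ZMod 2)} := by
    intro x hx
    rcases h x hx with rfl | rfl
    · simp
    · exact Submodule.mem_span_singleton_self _
  have h3 := (Submodule.finrank_mono h2).trans (finrank_span_le_card _)
  simp only [Set.toFinset_singleton, Finset.card_singleton] at h3
  omega

lemma z2 (x : ZMod 2) : x = 0 ∨ x = 1 := by revert x; decide
lemma z2add (x y : ZMod 2) : x + y = 0 ↔ x = y := by revert x y; decide

/-- connectedness of the induced subgraph on `A` -/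
def Conn (A : Finset V) : Prop := ∀ S ⊆ A, S.Nonempty → S ≠ A → ∃ e ∈ C.EA A, e ∈ C.cut S

lemma sum_pair {α : Type} [Fintype α] (r : α → Prop) (x : α → ZMod 2) {u w : α}
   (huw : u ≠ w) (h : ∀ v, r v ↔ v = u ∨ v = w) :
    ∑ v, (if r v then 1 else 0) * x v = x u + x w := by
  have : ∀ v, (if r v then 1 else 0) * x v = if v ∈ ({u, w} : Finset α) then x v else 0 := by
    intro v
    by_cases hv : v = u ∨ v = w
    · simp [h, hv]
    · simp [h, hv]
  simp_rw [this]
  rw [Finset.sum_ite_mem, Finset.univ_inter, Finset.sum_pair huw]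

lemma rank_bound (A : Finset V) (hA : C.Conn A) (hAc : Aᶜ.Nonempty) :
    A.card + (C.FA A).card ≤ (C.EA A).card + 1 := by
  let M : Matrix A (C.EA A) (ZMod 2) := fun v e => if C.VE v e then 1 else 0
  let N : Matrix (C.EA A) (C.FA A) (ZMod 2) := fun e f => if C.EF e f then 1 else 0
  have hMN : M * N = 0 := by
    ext v f
    rw [Matrix.mul_apply]
    simp only [M, N, mul_ite, mul_one, mul_zero, Matrix.zero_apply]
    have hf := f.2
    simp only [FA, Finset.mem_filter, Finset.mem_univ, true_and] at hf
    rw [Finset.sum_coe_sort (C.EA A) (fun e => if C.EF e f then (if C.VE v e then (1 : ZMod 2) else 0) else 0)]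
    have : ∑ e ∈ C.EA A, (if C.EF e f then (if C.VE v e then (1 : ZMod 2) else 0) else 0) =
      ∑ e, (if C.VE v e ∧ C.EF e f then (1 : ZMod 2) else 0) := by
      rw [← Finset.sum_subset (Finset.subset_univ (C.EA A))]
      · refine Finset.sum_congr rfl fun e _ => ?_
        by_cases h1 : C.VE v e <;> by_cases h2 : C.EF e f <;> simp [h1, h2]
      · intro e _ he
        rw [if_neg]
        rintro ⟨h1, h2⟩
        apply he
        simp only [EA, Finset.mem_filter, Finset.mem_univ, true_and]
        exact fun w hw => hf w ⟨e, hw, h2⟩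
    rw [this, Finset.sum_boole]
    by_cases hv : C.VF v f
    · rw [C.vf2 _ _ hv]; rfl
    · have : (Finset.univ.filter fun e => C.VE v e ∧ C.EF e f) = ∅ := by
        rw [Finset.filter_eq_empty_iff]; intro e _ he; exact hv ⟨e, he⟩
      rw [this]; rfl
  have h := Matrix.rank_add_rank_le_card_of_mul_eq_zero hMN
  rw [← Matrix.rank_transpose M] at h
  have hM : Fintype.card A ≤ M.transpose.rank + 1 := by
    apply ker_le_one
    intro x hx
    set S : Finset V := A.filter fun v => ∃ h : v ∈ A, x ⟨v, h⟩ = 1 with hS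
    have hno : ¬ ∃ e ∈ C.EA A, e ∈ C.cut S := by
      rintro ⟨e, he, hc⟩
      obtain ⟨u, w, huw, hh⟩ := C.ends e
      have he' := he
      simp only [EA, Finset.mem_filter, Finset.mem_univ, true_and] at he'
      have hu := he' u ((hh u).2 (by simp))
      have hw := he' w ((hh w).2 (by simp))
      have h1 : ∑ v : A, (if C.VE v e then (1 : ZMod 2) else 0) * x v = 0 := congrFun hx ⟨e, he⟩
      rw [sum_pair (fun v : A => C.VE v e) x (u := ⟨u, hu⟩) (w := ⟨w, hw⟩) (by simpa using huw)
        (by intro v; rw [hh]; simp [Subtype.ext_iff]), z2add] at h1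
      simp only [cut, Finset.mem_filter, Finset.mem_univ, true_and, hh, hS] at hc
      obtain ⟨⟨v, ⟨h3, h4, h5⟩, h6⟩, v', h7, h8⟩ := hc
      apply h7
      rcases h6 with rfl | rfl <;> rcases h8 with rfl | rfl <;> simp_all
    by_cases hS0 : S.Nonempty
    · by_cases hSA : S = A
      · right
        ext ⟨v, hv⟩
        have : v ∈ S := hSA ▸ hv
        simp only [hS, Finset.mem_filter] at this
        exact this.2.2
      · exact absurd (hA S (Finset.filter_subset _ _) hS0 hSA) hno
    · left
      rw [Finset.not_nonempty_iff_eq_empty] at hS0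
      ext ⟨v, hv⟩
      rcases z2 (x ⟨v, hv⟩) with h | h
      · exact h
      · have : v ∈ S := by simp only [hS, Finset.mem_filter]; exact ⟨hv, hv, h⟩
        simp [hS0] at this
  have hN : Fintype.card (C.FA A) = N.rank := by
    have hinj : Function.Injective N.mulVecLin := by
      rw [← LinearMap.ker_eq_bot, LinearMap.ker_eq_bot']
      intro x hx
      let y : F → ZMod 2 := fun f => if h : f ∈ C.FA A then x ⟨f, h⟩ else 0
      have hy := C.dual_conn y (by
        intro e f g hf hg
        by_cases he : e ∈ C.EA A
        · obtain ⟨p, q, hpq, hh⟩ := C.facs e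
          have h1 : ∑ f : C.FA A, (if C.EF e f then (1 : ZMod 2) else 0) * x f = 0 :=
            congrFun hx ⟨e, he⟩
          have h2 : ∑ f : C.FA A, (if C.EF e f then 1 else 0) * x f =
              ∑ f, (if C.EF e f then 1 else 0) * y f := by
            rw [← Finset.sum_subset (Finset.subset_univ (C.FA A)), ← Finset.sum_coe_sort (C.FA A)]
            · refine Finset.sum_congr rfl fun f _ => ?_
              simp [y]
            · intro f _ hf
              simp [y, hf]
          rw [h2, sum_pair (fun f => C.EF e f) y hpq hh, z2add] at h1
          rcases (hh f).1 hf with rfl | rfl <;> rcases (hh g).1 hg with rfl | rfl <;> simp [h1]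
        · have : ∀ f, C.EF e f → f ∉ C.FA A := by
            intro f hf hfA
            apply he
            simp only [EA, FA, Finset.mem_filter, Finset.mem_univ, true_and] at hfA ⊢
            exact fun v hv => hfA v ⟨e, hv, hf⟩
          simp [y, this f hf, this g hg])
      obtain ⟨w, hw⟩ := hAc
      obtain ⟨a, _, _, _, _, _, hw2⟩ := C.edges3 w
      have ha := (hw2 a).2 (by simp)
      obtain ⟨g, _, _, hg⟩ := C.facs a
      have hg := (hg g).2 (by simp)
      have hgA : g ∉ C.FA A := by
        intro h
        simp only [FA, Finset.mem_filter, Finset.mem_univ, true_and] at h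
        exact (Finset.mem_compl.1 hw) (h w ⟨a, ha, hg⟩)
      ext f
      have := hy f g
      simpa [y, hgA] using this
    rw [Matrix.rank, LinearMap.finrank_range_of_inj hinj, Module.finrank_fintype_fun_eq_card]
  simp only [Fintype.card_coe] at h hM hN
  omega

lemma exists_cut (c : E → ZMod 2) (hc : ∀ f, ∑ e, (if C.EF e f then 1 else 0) * c e = 0) :
    ∃ S : Finset V, ∀ e, e ∈ C.cut S ↔ c e = 1 := by
  let M : Matrix E V (ZMod 2) := fun e v => if C.VE v e then 1 else 0
  let N : Matrix F E (ZMod 2) := fun f e => if C.EF e f then 1 else 0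
  have hle : LinearMap.range M.mulVecLin ≤ LinearMap.ker N.mulVecLin := by
    rw [LinearMap.range_le_ker_iff, ← Matrix.mulVecLin_mul]
    have : N * M = 0 := by
      ext f v
      rw [Matrix.mul_apply]
      have : ∀ e, N f e * M e v = if C.VE v e ∧ C.EF e f then 1 else 0 := by
        intro e
        by_cases h1 : C.VE v e <;> by_cases h2 : C.EF e f <;> simp [M, N, h1, h2]
      simp only [this, Finset.sum_boole, Matrix.zero_apply]
      by_cases hv : C.VF v f
      · rw [C.vf2 _ _ hv]; rfl
      · have : (Finset.univ.filter fun e => C.VE v e ∧ C.EF e f) = ∅ := by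
          rw [Finset.filter_eq_empty_iff]; intro e _ he; exact hv ⟨e, he⟩
        rw [this]; rfl
    rw [this, Matrix.mulVecLin_zero]
  have hM : Fintype.card V ≤ Module.finrank (ZMod 2) (LinearMap.range M.mulVecLin) + 1 := by
    apply ker_le_one
    intro x hx
    have h1 : ∀ e u w, C.VE u e → C.VE w e → x u = x w := by
      intro e u w hu hw
      obtain ⟨p, q, hpq, hh⟩ := C.ends e
      have h1 : ∑ v, (if C.VE v e then (1 : ZMod 2) else 0) * x v = 0 := congrFun hx e
      rw [sum_pair (fun v => C.VE v e) x hpq hh, z2add] at h1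
      rcases (hh u).1 hu with rfl | rfl <;> rcases (hh w).1 hw with rfl | rfl <;> simp [h1]
    by_contra hne
    push Not at hne
    refine C.graph_conn (Finset.univ.filter fun v => x v = 1) ?_ ?_ ?_
    · rw [Finset.eq_empty_iff_forall_notMem]
      intro e he
      simp only [cut, Finset.mem_filter, Finset.mem_univ, true_and] at he
      obtain ⟨⟨u, h2, h3⟩, w, h4, h5⟩ := he
      exact h4 (by rw [← h2]; exact h1 e _ _ h5 h3)
    · obtain ⟨v, hv⟩ := Function.ne_iff.1 hne.1
      exact ⟨v, by simpa using (z2 (x v)).resolve_left hv⟩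
    · obtain ⟨v, hv⟩ := Function.ne_iff.1 hne.2
      exact ⟨v, by simpa using hv⟩
  have hN : Fintype.card F ≤ N.transpose.rank + 1 := by
    apply ker_le_one
    intro x hx
    have h1 := C.dual_conn x (by
      intro e f g hf hg
      obtain ⟨p, q, hpq, hh⟩ := C.facs e
      have h1 : ∑ f, (if C.EF e f then (1 : ZMod 2) else 0) * x f = 0 := congrFun hx e
      rw [sum_pair (fun f => C.EF e f) x hpq hh, z2add] at h1
      rcases (hh f).1 hf with rfl | rfl <;> rcases (hh g).1 hg with rfl | rfl <;> simp [h1])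
    by_contra hne
    push Not at hne
    obtain ⟨v, hv⟩ := Function.ne_iff.1 hne.1
    obtain ⟨w, hw⟩ := Function.ne_iff.1 hne.2
    have := (z2 (x v)).resolve_left hv
    rw [h1 v w] at this
    exact hw this
  rw [Matrix.rank_transpose, Matrix.rank] at hN
  have h1 := LinearMap.finrank_range_add_finrank_ker N.mulVecLin
  rw [Module.finrank_fintype_fun_eq_card] at h1
  have he := C.euler
  have heq := Submodule.eq_of_le_of_finrank_le hle (by omega)
  have hcm : c ∈ LinearMap.range M.mulVecLin := by
    rw [heq, LinearMap.mem_ker]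
    ext f
    exact hc f
  obtain ⟨g, hg⟩ := hcm
  refine ⟨Finset.univ.filter fun v => g v = 1, fun e => ?_⟩
  obtain ⟨p, q, hpq, hh⟩ := C.ends e
  have h1 : ∑ v, (if C.VE v e then (1 : ZMod 2) else 0) * g v = c e := congrFun hg e
  rw [sum_pair (fun v => C.VE v e) g hpq hh] at h1
  simp only [cut, Finset.mem_filter, Finset.mem_univ, true_and, hh, ← h1]
  have e1 : (∃ v, g v = 1 ∧ (v = p ∨ v = q)) ↔ g p = 1 ∨ g q = 1 := by grind
  have e2 : (∃ v, ¬ g v = 1 ∧ (v = p ∨ v = q)) ↔ ¬ g p = 1 ∨ ¬ g q = 1 := by grind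
  rw [e1, e2]
  generalize g p = x
  generalize g q = y
  revert x y; decide

end Cell
namespace Cell
variable {V E F : Type} [Fintype V] [Fintype E] [Fintype F] (C : Cell V E F)

lemma endsX (e : E) : ∃ u w, u ≠ w ∧ (∀ v, C.VE v e ↔ v = u ∨ v = w) ∧
    (∀ A, e ∈ C.EA A ↔ u ∈ A ∧ w ∈ A) ∧
    (∀ A, e ∈ C.cut A ↔ (u ∈ A ∧ w ∉ A) ∨ (w ∈ A ∧ u ∉ A)) := by
  obtain ⟨u, w, huw, h⟩ := C.ends e
  refine ⟨u, w, huw, h, ?_, ?_⟩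
  · intro A; simp [EA, h]
  · intro A
    simp only [cut, Finset.mem_filter, Finset.mem_univ, true_and, h]
    constructor
    · rintro ⟨⟨v, hv, rfl | rfl⟩, v', hv', rfl | rfl⟩ <;> tauto
    · rintro (⟨h1, h2⟩ | ⟨h1, h2⟩)
      · exact ⟨⟨u, h1, by simp⟩, w, h2, by simp⟩
      · exact ⟨⟨w, h1, by simp⟩, u, h2, by simp⟩

def Valid (A : Finset V) : Prop := A.Nonempty ∧ Aᶜ.Nonempty ∧ (C.cut A).card ≤ A.card ∧
  (C.cut A).card ≤ Aᶜ.card ∧ (C.cut A).card ≤ 4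

def VMin (A : Finset V) : Prop := C.Valid A ∧ ∀ B, C.Valid B → (C.cut A).card ≤ (C.cut B).card

variable {C}
lemma Valid.compl {A : Finset V} (h : C.Valid A) : C.Valid Aᶜ := by
  obtain ⟨h1, h2, h3, h4, h5⟩ := h
  exact ⟨h2, by rwa [compl_compl], by rwa [cut_compl], by rwa [cut_compl, compl_compl], by rwa [cut_compl]⟩

lemma VMin.compl {A : Finset V} (h : C.VMin A) : C.VMin Aᶜ :=
  ⟨h.1.compl, fun B hB => by rw [cut_compl]; exact h.2 B hB⟩

lemma VMin.congr {A B : Finset V} (h : C.VMin A) (hB : C.Valid B) (h2 : (C.cut B).card ≤ (C.cut A).card) :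
    C.VMin B := ⟨hB, fun D hD => h2.trans (h.2 D hD)⟩

lemma cut_pos (A : Finset V) (h1 : A.Nonempty) (h2 : Aᶜ.Nonempty) : 0 < (C.cut A).card := by
  rw [Finset.card_pos, Finset.nonempty_iff_ne_empty]
  exact fun h => C.graph_conn A h h1 h2

lemma VMin.conn {A : Finset V} (h : C.VMin A) : C.Conn A := by
  intro S hSA hS hne
  by_contra hno
  push Not at hno
  obtain ⟨⟨h1, h2, h3, h4, h5⟩, hmin⟩ := h
  have hT : (A \ S).Nonempty := by
    rw [Finset.sdiff_nonempty]; exact fun h => hne (hSA.antisymm h)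
  have hd : Disjoint (C.cut S) (C.cut (A \ S)) := by
    rw [Finset.disjoint_left]
    intro e he he2
    obtain ⟨u, w, huw, hh, hEA, hcut⟩ := C.endsX e
    have := hno e
    rw [hcut] at he he2
    simp only [hEA, hcut, Finset.mem_sdiff] at *
    grind
  have hs : C.cut S ∪ C.cut (A \ S) ⊆ C.cut A := by
    intro e he
    obtain ⟨u, w, huw, hh, hEA, hcut⟩ := C.endsX e
    have := hno e
    simp only [Finset.mem_union, hEA, hcut, Finset.mem_sdiff] at *
    have := @hSA u; have := @hSA w
    grind
  have hc := Finset.card_le_card hs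
  rw [Finset.card_union_of_disjoint hd] at hc
  have hcA := Finset.card_sdiff_add_card_eq_card hSA
  have c1 : Aᶜ ⊆ Sᶜ := by simpa using hSA
  have c2 : Aᶜ ⊆ (A \ S)ᶜ := by simp
  have p1 := C.cut_pos S hS (h2.mono c1)
  have p2 := C.cut_pos _ hT (h2.mono c2)
  have := Finset.card_le_card c1
  have := Finset.card_le_card c2
  rcases le_or_gt (C.cut S).card S.card with hl | hl
  · have := hmin S ⟨hS, h2.mono c1, hl, by omega, by omega⟩
    omega
  · have := hmin _ ⟨hT, h2.mono c2, by omega, by omega, by omega⟩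
    omega

lemma VMin.one {A : Finset V} (h : C.VMin A) {v : V} (hv : v ∈ A) {a b : E} (ha : a ∈ C.cut A)
    (hb : b ∈ C.cut A) (hva : C.VE v a) (hvb : C.VE v b) : a = b := by
  by_contra hab
  obtain ⟨⟨h1, h2, h3, h4, h5⟩, hmin⟩ := h
  have hc2 : 2 ≤ (C.cut A).card := by
    rw [← Finset.card_pair hab]
    apply Finset.card_le_card
    intro x; simp; rintro (rfl | rfl) <;> assumption
  obtain ⟨c, hc⟩ : ∃ c, ∀ e, C.VE v e → e = a ∨ e = b ∨ e = c := by
    obtain ⟨x, y, z, -, -, -, h⟩ := C.edges3 v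
    have h1 := (h a).1 hva
    have h2 := (h b).1 hvb
    by_cases hx : a ≠ x ∧ b ≠ x
    · exact ⟨x, fun e he => by have := (h e).1 he; grind⟩
    · by_cases hy : a ≠ y ∧ b ≠ y
      · exact ⟨y, fun e he => by have := (h e).1 he; grind⟩
      · exact ⟨z, fun e he => by have := (h e).1 he; grind⟩
  have hs : C.cut (A.erase v) ⊆ insert c (((C.cut A).erase a).erase b) := by
    intro e he
    obtain ⟨u, w, huw, hh, hEA, hcut⟩ := C.endsX e
    have hce := hc e
    simp only [Finset.mem_insert, Finset.mem_erase]
    rw [hcut] at *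
    rw [hh] at hce
    simp only [Finset.mem_erase] at he
    by_cases hea : e = a
    · subst hea
      rw [hh] at hva; rw [hcut] at ha
      grind
    · by_cases heb : e = b
      · subst heb
        rw [hh] at hvb; rw [hcut] at hb
        grind
      · grind
  have e1 := Finset.card_le_card hs
  have e2 := Finset.card_insert_le c (((C.cut A).erase a).erase b)
  rw [Finset.card_erase_of_mem (Finset.mem_erase.2 ⟨Ne.symm hab, hb⟩), Finset.card_erase_of_mem ha] at e2
  have e3 := Finset.card_erase_of_mem hv
  have c1 : Aᶜ ⊆ (A.erase v)ᶜ := by simp [Finset.erase_subset]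
  have := Finset.card_le_card c1
  have := hmin _ ⟨Finset.card_pos.1 (by omega), h2.mono c1, by omega, by omega, by omega⟩
  omega

variable (C) in
def p5 (T : Finset F) : ℕ := (T.filter fun f => (C.fe f).card = 5).card

lemma sum_p5 (T : Finset F) : ∑ f ∈ T, (C.fe f).card + C.p5 T = 6 * T.card := by
  rw [p5, Finset.card_filter, ← Finset.sum_add_distrib, mul_comm, ← smul_eq_mul, ← Finset.sum_const]
  refine Finset.sum_congr rfl fun f _ => ?_
  rcases C.f56 f with h | h
  · simp [fe, h]
  · simp [fe, h]

lemma VMin.tight {A : Finset V} (h : C.VMin A) : (C.FX A).card = (C.cut A).card ∧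
    A.card + (C.FA A).card = (C.EA A).card + 1 := by
  have h1 := C.rank_bound A h.conn h.1.2.1
  have h2 := C.rank_bound Aᶜ h.compl.conn h.compl.1.2.1
  have h3 := C.euler
  have h4 := C.countE A
  have h5 := C.countF A
  have h6 := C.FX_le A
  have h7 := Finset.card_add_card_compl A
  omega

lemma VMin.pent {A : Finset V} (h : C.VMin A) :
    C.p5 (C.FA A) + 2 * (C.cut A).card = 6 + C.alpha A := by
  have h1 := h.tight
  have h2 := C.count1 A
  have h3 := C.count2 A
  have h4 := C.sum_p5 (C.FA A)
  omega

lemma VMin.alpha_add {A : Finset V} (h : C.VMin A) :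
    C.alpha A + C.alpha Aᶜ + C.p5 (C.FX A) = 4 * (C.cut A).card := by
  have h1 := h.tight
  have h2 := C.count3 A
  have h4 := C.sum_p5 (C.FX A)
  omega

variable (C) in
def lay (A : Finset V) : Finset V := A.filter fun v => ∀ f ∈ C.FX A, ¬ C.VF v f

lemma VMin.L1 {A : Finset V} (h : C.VMin A) : A.card ≤ (C.lay A).card + C.alpha A := by
  have h1 : ∀ f, ∑ v ∈ A, (((C.EA A).filter fun e => C.EF e f).filter fun e => C.VE v e).card
      = 2 * ((C.EA A).filter fun e => C.EF e f).card := by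
    intro f
    rw [C.count_VE]
    have a1 : (((C.EA A).filter fun e => C.EF e f).filter fun e => e ∈ C.EA A) =
        (C.EA A).filter fun e => C.EF e f := by
      rw [Finset.filter_eq_self]; intro e he; exact (Finset.mem_filter.1 he).1
    have a2 : (((C.EA A).filter fun e => C.EF e f).filter fun e => e ∈ C.cut A) = ∅ := by
      rw [Finset.filter_eq_empty_iff]; intro e he
      have := (Finset.mem_filter.1 he).1
      have := C.edge_tri A e
      tauto
    rw [a1, a2]; simp
  have h2 : 2 * C.alpha A = ∑ v ∈ A, ∑ f ∈ C.FX A,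
      (((C.EA A).filter fun e => C.EF e f).filter fun e => C.VE v e).card := by
    rw [Finset.sum_comm, alpha, Finset.mul_sum]
    exact Finset.sum_congr rfl fun f _ => (h1 f).symm
  have h3 : ∀ v ∈ A \ C.lay A, 2 ≤ ∑ f ∈ C.FX A,
      (((C.EA A).filter fun e => C.EF e f).filter fun e => C.VE v e).card := by
    intro v hv
    simp only [lay, Finset.mem_sdiff, Finset.mem_filter, not_and, not_forall, not_not] at hv
    obtain ⟨hvA, hv2⟩ := hv
    obtain ⟨f, hfX, hf⟩ := hv2 hvA
    have hEA : ∀ e, C.VE v e → e ∉ C.cut A → e ∈ C.EA A := by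
      intro e he hc
      obtain ⟨u, w, huw, hh, hEA, hcut⟩ := C.endsX e
      rw [hEA]; rw [hcut] at hc; rw [hh] at he
      grind
    by_cases hex : ∃ e ∈ C.cut A, C.VE v e
    · obtain ⟨e, hec, hve⟩ := hex
      obtain ⟨f1, f2, hne, hff⟩ := C.facs e
      have key : ∀ g, C.EF e g →
          1 ≤ (((C.EA A).filter fun e => C.EF e g).filter fun e => C.VE v e).card := by
        intro g hg
        obtain ⟨a, b, hab, hh⟩ := C.edges2 (v := v) (f := g) ⟨e, hve, hg⟩
        have : ∃ x, x ≠ e ∧ C.VE v x ∧ C.EF x g := by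
          by_cases hae : a = e
          · exact ⟨b, by rw [← hae]; exact hab.symm, (hh b).2 (by simp)⟩
          · exact ⟨a, hae, (hh a).2 (by simp)⟩
        obtain ⟨x, hxe, hx1, hx2⟩ := this
        apply Finset.card_pos.2
        refine ⟨x, ?_⟩
        simp only [Finset.mem_filter]
        exact ⟨⟨hEA x hx1 (fun hc => hxe (h.one hvA hc hec hx1 hve)), hx2⟩, hx1⟩
      have k1 := (hff f1).2 (by simp)
      have k2 := (hff f2).2 (by simp)
      have hsub : ({f1, f2} : Finset F) ⊆ C.FX A := by
        intro x; simp; rintro (rfl | rfl)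
        · exact C.cut_FX hec k1
        · exact C.cut_FX hec k2
      refine le_trans ?_ (Finset.sum_le_sum_of_subset hsub)
      rw [Finset.sum_pair hne]
      have := key _ k1; have := key _ k2
      omega
    · push Not at hex
      refine le_trans ?_ (Finset.single_le_sum (f := fun f => (((C.EA A).filter fun e => C.EF e f).filter fun e => C.VE v e).card) (fun _ _ => Nat.zero_le _) hfX)
      rw [← C.vf2 v f hf]
      apply Finset.card_le_card
      intro e he
      simp only [Finset.mem_filter, Finset.mem_univ, true_and] at he ⊢
      exact ⟨⟨hEA e he.1 (fun hc => hex e hc he.1), he.2⟩, he.1⟩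
  have h4 := Finset.card_nsmul_le_sum _ _ 2 h3
  have h5 := h4.trans (Finset.sum_le_sum_of_subset Finset.sdiff_subset)
  rw [← h2, smul_eq_mul] at h5
  have h6 := Finset.card_sdiff_add_card_eq_card (s := C.lay A) (t := A) (Finset.filter_subset _ _)
  omega

lemma VMin.L2 {A : Finset V} (h : C.VMin A) :
    (C.cut A).card + (C.cut (C.lay A)).card + (C.lay A).card ≤ A.card := by
  have hlay : ∀ v, v ∈ C.lay A ↔ v ∈ A ∧ ∀ f ∈ C.FX A, ¬ C.VF v f := fun v => by simp [lay]
  have hd : ∀ e ∈ C.cut (C.lay A), ∀ f, C.EF e f → f ∉ C.FX A := by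
    intro e he f hf hfX
    simp only [cut, Finset.mem_filter, Finset.mem_univ, true_and] at he
    obtain ⟨⟨v, hv, hve⟩, _⟩ := he
    exact ((hlay v).1 hv).2 f hfX ⟨e, hve, hf⟩
  have hdis : Disjoint (C.cut A) (C.cut (C.lay A)) := by
    rw [Finset.disjoint_left]
    intro e h1 h2
    obtain ⟨f, _, _, hf⟩ := C.facs e
    have hf := (hf f).2 (by simp)
    exact hd e h2 f hf (C.cut_FX h1 hf)
  have hex : ∀ e ∈ C.cut A ∪ C.cut (C.lay A),
      1 ≤ ((A \ C.lay A).filter fun v => C.VE v e).card := by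
    intro e he
    apply Finset.card_pos.2
    rw [Finset.mem_union] at he
    simp only [Finset.Nonempty, Finset.mem_filter, Finset.mem_sdiff]
    rcases he with he | he
    · obtain ⟨f, _, _, hf⟩ := C.facs e
      have hf := (hf f).2 (by simp)
      have hfX := C.cut_FX he hf
      simp only [cut, Finset.mem_filter, Finset.mem_univ, true_and] at he
      obtain ⟨⟨v, hv, hve⟩, _⟩ := he
      exact ⟨v, ⟨hv, fun hl => ((hlay v).1 hl).2 f hfX ⟨e, hve, hf⟩⟩, hve⟩
    · have hnc := Finset.disjoint_right.1 hdis he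
      simp only [cut, Finset.mem_filter, Finset.mem_univ, true_and] at he hnc
      obtain ⟨⟨v, hv, hve⟩, w, hw, hwe⟩ := he
      refine ⟨w, ⟨?_, hw⟩, hwe⟩
      by_contra hwA
      exact hnc ⟨⟨v, ((hlay v).1 hv).1, hve⟩, w, hwA, hwe⟩
  have hone : ∀ v ∈ A \ C.lay A, ((C.cut A ∪ C.cut (C.lay A)).filter fun e => C.VE v e).card ≤ 1 := by
    intro v hv
    rw [Finset.mem_sdiff, hlay] at hv
    obtain ⟨hvA, hv2⟩ := hv
    have : ∃ f ∈ C.FX A, C.VF v f := by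
      by_contra hn; push Not at hn; exact hv2 ⟨hvA, hn⟩
    obtain ⟨f, hfX, hf⟩ := this
    have key : ∀ x y, x ∈ C.cut (C.lay A) → C.VE v x → C.VE v y →
        y ∈ C.cut A ∪ C.cut (C.lay A) → x = y := by
      intro x y hx hvx hvy hy
      by_contra hxy
      obtain ⟨a, b, c, p, q, r, hab, hac, hbc, hpq, hpr, hqr, hh, ha, hb, hc⟩ := C.local3 v
      have hd1 := hd x hx
      -- y shares a facet with x, and y contains f
      have s1 : ∃ g, C.EF x g ∧ C.EF y g := by
        rcases (hh x).1 hvx with rfl | rfl | rfl <;> rcases (hh y).1 hvy with rfl | rfl | rfl <;>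
          first
          | (exfalso; exact hxy rfl)
          | (refine ⟨p, ?_, ?_⟩ <;> simp [ha, hb, hc] <;> done)
          | (refine ⟨q, ?_, ?_⟩ <;> simp [ha, hb, hc] <;> done)
          | (refine ⟨r, ?_, ?_⟩ <;> simp [ha, hb, hc] <;> done)
      obtain ⟨g, hg1, hg2⟩ := s1
      have hxf : ¬ C.EF x f := fun hh => hd1 f hh hfX
      have hyf : C.EF y f := by
        obtain ⟨s, t, hst, h2⟩ := C.edges2 hf
        have h3 := h2 x; have h4 := h2 y
        have m1 := (h2 s).2 (by simp)
        have m2 := (h2 t).2 (by simp)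
        have n1 := (hh s).1 m1.1
        have n2 := (hh t).1 m2.1
        have n3 := (hh x).1 hvx
        have n4 := (hh y).1 hvy
        grind
      rcases Finset.mem_union.1 hy with hy | hy
      · exact hd1 g hg1 (C.cut_FX hy hg2)
      · exact hd y hy f hyf hfX
    rw [Finset.card_le_one]
    intro x hx y hy
    rw [Finset.mem_filter] at hx hy
    rcases Finset.mem_union.1 hx.1 with hx1 | hx1
    · rcases Finset.mem_union.1 hy.1 with hy1 | hy1
      · exact h.one hvA hx1 hy1 hx.2 hy.2
      · exact (key y x hy1 hy.2 hx.2 hx.1).symm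
    · exact key x y hx1 hx.2 hy.2 hy.1
  have e1 := Finset.card_nsmul_le_sum _ _ 1 hex
  have e2 := Finset.sum_le_card_nsmul _ _ 1 hone
  rw [dc] at e2
  have h6 := Finset.card_sdiff_add_card_eq_card (s := C.lay A) (t := A) (Finset.filter_subset _ _)
  rw [smul_eq_mul, mul_one] at e1 e2
  rw [Finset.card_union_of_disjoint hdis] at e1
  omega

lemma no_valid (A : Finset V) (hA : C.Valid A) : False := by
  obtain ⟨A0, hA0, hm0⟩ := Finset.exists_min_image (Finset.univ.filter fun A => C.Valid A)
    (fun A => (C.cut A).card) ⟨A, by simp [hA]⟩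
  simp only [Finset.mem_filter, Finset.mem_univ, true_and] at hA0 hm0
  have hV0 : C.VMin A0 := ⟨hA0, hm0⟩
  have hex : ∃ B, C.VMin B ∧ C.alpha B ≤ 2 * (C.cut B).card := by
    have := hV0.alpha_add
    rcases le_or_gt (C.alpha A0) (2 * (C.cut A0).card) with h | h
    · exact ⟨A0, hV0, h⟩
    · exact ⟨A0ᶜ, hV0.compl, by rw [cut_compl]; omega⟩
  obtain ⟨B0, hB0⟩ := hex
  obtain ⟨B, hB, hmB⟩ := Finset.exists_min_image (Finset.univ.filter fun B => C.VMin B ∧ C.alpha B ≤ 2 * (C.cut B).card)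
    (fun A => A.card) ⟨B0, by simp only [Finset.mem_filter, Finset.mem_univ, true_and]; exact hB0⟩
  simp only [Finset.mem_filter, Finset.mem_univ, true_and] at hB hmB
  obtain ⟨hV, ha⟩ := hB
  have l1 := hV.L1
  have l2 := hV.L2
  have t := hV.tight
  have pe := hV.pent
  have pc := hV.compl.pent
  have aa := hV.alpha_add
  have c1 := C.count1 B
  have v := hV.1
  obtain ⟨v1, v2, v3, v4, v5⟩ := v
  have hp : C.p5 (C.FA B) ≤ (C.FA B).card := Finset.card_filter_le _ _
  have hpos := C.cut_pos B v1 v2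
  rw [cut_compl] at pc
  rcases le_or_gt (C.lay B).card (C.cut (C.lay B)).card with hl | hl
  · omega
  · have sub : Bᶜ ⊆ (C.lay B)ᶜ := by rw [Finset.compl_subset_compl]; exact Finset.filter_subset _ _
    have hsub := Finset.card_le_card sub
    have hval : C.Valid (C.lay B) := ⟨Finset.card_pos.1 (by omega), v2.mono sub, by omega, by omega, by omega⟩
    have hW := hV.congr hval (by omega)
    have := hV.2 _ hval
    have aa' := hW.alpha_add
    have pc' := hW.compl.pent
    rw [cut_compl] at pc'
    have hpp : C.p5 (C.FA Bᶜ) + C.p5 (C.FX B) ≤ C.p5 (C.FA (C.lay B)ᶜ) := by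
      unfold p5
      rw [← Finset.card_union_of_disjoint]
      · apply Finset.card_le_card
        rw [← Finset.filter_union]
        apply Finset.filter_subset_filter
        intro f hf
        rw [Finset.mem_union] at hf
        rcases hf with hf | hf
        · simp only [FA, Finset.mem_filter, Finset.mem_univ, true_and] at hf ⊢
          exact fun v hv => sub (hf v hv)
        · simp only [FA, Finset.mem_filter, Finset.mem_univ, true_and, Finset.mem_compl, lay, not_and]
          exact fun v hv _ h => h f hf hv
      · apply Finset.disjoint_filter_filter
        rw [Finset.disjoint_left]
        intro f h1 h2
        have := C.fac_tri B f
        tauto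
    have := hmB (C.lay B) ⟨hW, by omega⟩
    omega

/-- no belt of four facets -/
lemma no_belt (f : Fin 4 → F) (e : Fin 4 → E) (hf : Function.Injective f)
    (he : ∀ i g, C.EF (e i) g ↔ g = f i ∨ g = f (i + 1))
    (hd : ∀ i j v, C.VE v (e i) → C.VE v (e j) → i = j) : False := by
  have hei : Function.Injective e := by
    intro i j hij
    obtain ⟨u, _, _, hu⟩ := C.ends (e i)
    have := (hu u).2 (by simp)
    exact hd i j u this (hij ▸ this)
  let c : E → ZMod 2 := fun x => if ∃ i, x = e i then 1 else 0
  obtain ⟨S, hS⟩ := C.exists_cut c (by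
    intro g
    have : ∑ x, (if C.EF x g then (1 : ZMod 2) else 0) * c x =
        ∑ i, (if C.EF (e i) g then (1 : ZMod 2) else 0) := by
      rw [← Finset.sum_image (s := Finset.univ) (g := e)
        (f := fun x => if C.EF x g then (1 : ZMod 2) else 0) (fun i _ j _ h => hei h)]
      rw [← Finset.sum_subset (Finset.subset_univ (Finset.univ.image e))]
      · refine Finset.sum_congr rfl fun x hx => ?_
        have : ∃ i, x = e i := by
          obtain ⟨i, _, rfl⟩ := Finset.mem_image.1 hx
          exact ⟨i, rfl⟩
        simp [c, this]
      · intro x _ hx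
        have : ¬ ∃ i, x = e i := by
          rintro ⟨i, rfl⟩
          exact hx (Finset.mem_image_of_mem _ (Finset.mem_univ _))
        simp [c, this]
    rw [this]
    simp only [he]
    have h01 := hf.ne (show (0 : Fin 4) ≠ 1 by decide)
    have h02 := hf.ne (show (0 : Fin 4) ≠ 2 by decide)
    have h03 := hf.ne (show (0 : Fin 4) ≠ 3 by decide)
    have h12 := hf.ne (show (1 : Fin 4) ≠ 2 by decide)
    have h13 := hf.ne (show (1 : Fin 4) ≠ 3 by decide)
    have h23 := hf.ne (show (2 : Fin 4) ≠ 3 by decide)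
    have two : (1 : ZMod 2) + 1 = 0 := by decide
    have e1 : (1 : Fin 4) + 1 = 2 := rfl
    have e2 : (2 : Fin 4) + 1 = 3 := rfl
    have e3 : (3 : Fin 4) + 1 = 0 := rfl
    rw [Fin.sum_univ_four]
    simp only [zero_add, e1, e2, e3]
    by_cases g0 : g = f 0
    · subst g0; simp [h01, h02, h03, two]
    · by_cases g1 : g = f 1
      · subst g1; simp [h01.symm, h12, h13, two]
      · by_cases g2 : g = f 2
        · subst g2; simp [h02.symm, h12.symm, h23, two]
        · by_cases g3 : g = f 3
          · subst g3; simp [h03.symm, h13.symm, h23.symm, two]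
          · simp [g0, g1, g2, g3])
  have hcut : C.cut S = Finset.univ.image e := by
    ext x
    rw [hS]
    simp only [c, Finset.mem_image, Finset.mem_univ, true_and]
    by_cases h : ∃ i, x = e i
    · simp only [h, if_true, true_iff]
      obtain ⟨i, hi⟩ := h
      exact ⟨i, hi.symm⟩
    · simp only [h, if_false, zero_ne_one, false_iff]
      rintro ⟨i, hi⟩
      exact h ⟨i, hi.symm⟩
  have hcard : (C.cut S).card = 4 := by
    rw [hcut, Finset.card_image_of_injective _ hei]; simp
  have big : ∀ T : Finset V, C.cut T = Finset.univ.image e → 4 ≤ T.card := by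
    intro T hT
    have : ∀ i, ∃ v ∈ T, C.VE v (e i) := by
      intro i
      have : e i ∈ C.cut T := by rw [hT]; exact Finset.mem_image_of_mem _ (Finset.mem_univ _)
      simp only [cut, Finset.mem_filter] at this
      exact this.2.1
    choose φ h1 h2 using this
    have hinj : Function.Injective φ := fun i j hij => hd i j (φ i) (h2 i) (hij ▸ h2 j)
    have : Finset.univ.image φ ⊆ T := by
      intro x hx
      obtain ⟨i, _, rfl⟩ := Finset.mem_image.1 hx
      exact h1 i
    have := Finset.card_le_card this
    rw [Finset.card_image_of_injective _ hinj] at this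
    simpa using this
  have b1 := big S hcut
  have b2 := big Sᶜ (by rw [cut_compl]; exact hcut)
  exact no_valid S (C := C) ⟨Finset.card_pos.1 (by omega), Finset.card_pos.1 (by omega), by omega, by omega, by omega⟩

end Cell

end


namespace Geo

variable {P F : Set E3}

lemma poly_compact (hP : IsPolytope P) : IsCompact P := by
  obtain ⟨W, rfl⟩ := hP
  exact W.finite_toSet.isCompact_convexHull ℝ

lemma poly_convex (hP : IsPolytope P) : Convex ℝ P := by
  obtain ⟨W, rfl⟩ := hP
  exact convex_convexHull _ _

lemma ext_finite (hP : IsPolytope P) : (P.extremePoints ℝ).Finite := by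
  obtain ⟨W, rfl⟩ := hP
  exact W.finite_toSet.subset extremePoints_convexHull_subset

lemma face_compact (hP : IsPolytope P) (hF : IsFaceOf F P) : IsCompact F :=
  (poly_compact hP).of_isClosed_subset hF.2.1 hF.2.2.2.subset

lemma face_hull (hP : IsPolytope P) (hF : IsFaceOf F P) :
    F = convexHull ℝ (F ∩ P.extremePoints ℝ) := by
  have h := closure_convexHull_extremePoints (face_compact hP hF) hF.2.2.1
  rw [hF.2.2.2.extremePoints_eq] at h
  have hfin : (F ∩ P.extremePoints ℝ).Finite := (ext_finite hP).inter_of_right _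
  rwa [(hfin.isClosed_convexHull ℝ).closure_eq, eq_comm] at h

lemma face_ext (hP : IsPolytope P) (hF : IsFaceOf F P) :
    (F ∩ P.extremePoints ℝ).Nonempty := by
  rw [← hF.2.2.2.extremePoints_eq]
  exact (face_compact hP hF).extremePoints_nonempty hF.1

lemma faces_finite (hP : IsPolytope P) : {F | IsFaceOf F P}.Finite := by
  refine Set.Finite.of_finite_image (f := fun F => F ∩ P.extremePoints ℝ) ?_ ?_
  · refine (ext_finite hP).finite_subsets.subset ?_
    rintro _ ⟨F, _, rfl⟩
    exact inter_subset_right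
  · intro F hF G hG h
    rw [face_hull hP hF, face_hull hP hG]
    simp only at h
    rw [h]

lemma vertex_iff {v : E3} : IsVertexOf v P ↔ v ∈ P.extremePoints ℝ := by
  simp only [IsVertexOf, IsFaceOf, isExtreme_singleton]
  exact ⟨fun h => h.2.2.2, fun h => ⟨singleton_nonempty _, isClosed_singleton, convex_singleton _, h⟩⟩

lemma collinear_of_dim (h : setDim F ≤ 1) : Collinear ℝ F :=
  collinear_iff_finrank_le_one.2 h

/-- a face of the polytope cut out by a supporting functional -/
lemma face_of_support (hP : IsPolytope P) (g : E3 →ₗ[ℝ] ℝ) (c : ℝ) (h : ∀ x ∈ P, c ≤ g x)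
    (hne : ∃ x ∈ P, g x = c) : IsFaceOf {x ∈ P | g x = c} P := by
  refine ⟨hne, ?_, ?_, ?_⟩
  · exact (poly_compact hP).isClosed.inter
      (isClosed_eq (LinearMap.continuous_of_finiteDimensional g) continuous_const)
  · intro x hx y hy a b ha hb hab
    refine ⟨poly_convex hP hx.1 hy.1 ha hb hab, ?_⟩
    simp only [map_add, map_smul, smul_eq_mul, hx.2, hy.2]
    rw [← add_mul, hab, one_mul]
  · refine ⟨fun x hx => hx.1, ?_⟩
    rintro x hx y hy z hz ⟨a, b, ha, hb, hab, rfl⟩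
    refine ⟨hx, ?_⟩
    have h1 := h x hx
    have h2 := h y hy
    have h3 := hz.2
    simp only [map_add, map_smul, smul_eq_mul] at h3
    have : b = 1 - a := by linarith
    subst this
    nlinarith

lemma relint_ext (hF : Convex ℝ F) (hne : F.Nonempty) : ∃ x0 ∈ F, ∀ y ∈ affineSpan ℝ F,
    ∃ z ∈ F, x0 ∈ openSegment ℝ y z := by
  obtain ⟨x0, hx0⟩ := hne.intrinsicInterior hF
  refine ⟨x0, intrinsicInterior_subset hx0, fun y hy => ?_⟩
  obtain ⟨x, hx, rfl⟩ := mem_intrinsicInterior.1 hx0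
  have : Nonempty (affineSpan ℝ F) := ⟨x⟩
  let y' : affineSpan ℝ F := ⟨y, hy⟩
  have hc : Continuous (fun t : ℝ => AffineMap.lineMap (k := ℝ) y' x t) :=
    AffineMap.lineMap_continuous
  have h1 : ∀ᶠ t in nhds (1 : ℝ), AffineMap.lineMap (k := ℝ) y' x t ∈ ((↑) ⁻¹' F : Set (affineSpan ℝ F)) := by
    have := hc.tendsto 1
    rw [AffineMap.lineMap_apply_one] at this
    exact this.eventually (mem_interior_iff_mem_nhds.1 hx)
  have h2 : ∀ᶠ t in nhdsWithin (1 : ℝ) (Set.Ioi 1), AffineMap.lineMap (k := ℝ) y' x t ∈ ((↑) ⁻¹' F : Set (affineSpan ℝ F)) := h1.filter_mono nhdsWithin_le_nhds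
  obtain ⟨t, ht, ht1⟩ := (h2.and self_mem_nhdsWithin).exists
  refine ⟨_, ht, ?_⟩
  have e : ((AffineMap.lineMap (k := ℝ) y' x t : affineSpan ℝ F) : E3) = y + t • ((x : E3) - y) := by
    simp [AffineMap.lineMap_apply, y', add_comm]
  rw [e]
  have ht1 : 1 < t := ht1
  have ht0 : 0 < t := by linarith
  refine ⟨1 - 1 / t, 1 / t, ?_, by positivity, by ring, ?_⟩
  · rw [sub_pos, div_lt_one ht0]; exact ht1
  · rw [smul_add, smul_smul, one_div, inv_mul_cancel₀ ht0.ne']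
    module

/-- supporting functional of a facet -/
lemma facet_support (hP : IsPolytope P) (hF : IsFacetOf F P) :
    ∃ (g : E3 →ₗ[ℝ] ℝ) (c : ℝ), (∀ x ∈ P, c ≤ g x) ∧ F = {x ∈ P | g x = c} := by
  obtain ⟨⟨hne, hcl, hcv, hex⟩, hd⟩ := hF
  have hfr : Module.finrank ℝ E3 = 3 := by simp
  have hlt : vectorSpan ℝ F < ⊤ := by
    apply lt_top_iff_ne_top.2
    intro h
    rw [setDim, h, finrank_top, hfr] at hd
    omega
  obtain ⟨g, hg0, hg⟩ := Submodule.exists_le_ker_of_lt_top _ hlt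
  have hker : LinearMap.ker g = vectorSpan ℝ F := by
    symm
    apply Submodule.eq_of_le_of_finrank_le hg
    have h1 := LinearMap.finrank_range_add_finrank_ker g
    have h2 : LinearMap.range g = ⊤ := LinearMap.range_eq_top.2 (LinearMap.surjective hg0)
    rw [h2, finrank_top, hfr] at h1
    simp at h1
    rw [setDim] at hd
    omega
  obtain ⟨x0, hx0, hx⟩ := relint_ext hcv hne
  have hFc : ∀ y ∈ F, g y = g x0 := by
    intro y hy
    have : y -ᵥ x0 ∈ vectorSpan ℝ F := vsub_mem_vectorSpan ℝ hy hx0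
    rw [← hker, LinearMap.mem_ker] at this
    simpa [sub_eq_zero] using this
  have key : ∀ y ∈ P, g y = g x0 → y ∈ F := by
    intro y hy hgy
    have : y ∈ affineSpan ℝ F := by
      have h1 : y - x0 ∈ vectorSpan ℝ F := by
        rw [← hker, LinearMap.mem_ker, map_sub, hgy, sub_self]
      have := AffineSubspace.vadd_mem_of_mem_direction (s := affineSpan ℝ F)
        (by rwa [direction_affineSpan]) (subset_affineSpan ℝ F hx0)
      simpa using this
    obtain ⟨z, hz, hs⟩ := hx y this
    exact hex.left_mem_of_mem_openSegment hy (hex.subset hz) hx0 hs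
  have nocross : ∀ y ∈ P, ∀ z ∈ P, g y < g x0 → g x0 < g z → False := by
    intro y hy z hz h1 h2
    set a := (g z - g x0) / (g z - g y) with ha
    have hpos : 0 < g z - g y := by linarith
    have ha0 : 0 < a := div_pos (by linarith) hpos
    have ha1 : a < 1 := by rw [ha, div_lt_one hpos]; linarith
    have hm : a • y + (1 - a) • z ∈ P := poly_convex hP hy hz ha0.le (by linarith) (by ring)
    have hgm : g (a • y + (1 - a) • z) = g x0 := by
      simp only [map_add, map_smul, smul_eq_mul]
      have : a * (g z - g y) = g z - g x0 := by rw [ha]; field_simp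
      linarith
    have := hex.left_mem_of_mem_openSegment hy hz (key _ hm hgm)
      ⟨a, 1 - a, ha0, by linarith, by ring, rfl⟩
    have := hFc y this
    linarith
  by_cases hc : ∃ y ∈ P, g y < g x0
  · obtain ⟨y, hy, hlt⟩ := hc
    refine ⟨-g, -g x0, ?_, ?_⟩
    · intro z hz
      have : ¬ g x0 < g z := fun h => nocross y hy z hz hlt h
      simp only [LinearMap.neg_apply]; linarith
    · ext z
      simp only [mem_setOf_eq, LinearMap.neg_apply, neg_inj]
      exact ⟨fun h => ⟨hex.subset h, hFc z h⟩, fun h => key z h.1 h.2⟩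
  · push Not at hc
    refine ⟨g, g x0, hc, ?_⟩
    ext z
    simp only [mem_setOf_eq]
    exact ⟨fun h => ⟨hex.subset h, hFc z h⟩, fun h => key z h.1 h.2⟩

end Geo

namespace Geo

variable {P F : Set E3}

lemma interior_ne (hP : IsPolytope P) (h3 : setDim P = 3) : (interior P).Nonempty := by
  rw [(poly_convex hP).interior_nonempty_iff_affineSpan_eq_top]
  have hne : P.Nonempty := by
    by_contra h
    rw [not_nonempty_iff_eq_empty] at h
    rw [h, setDim, vectorSpan_empty] at h3
    simp at h3
  rw [AffineSubspace.affineSpan_eq_top_iff_vectorSpan_eq_top_of_nonempty ℝ E3 E3 hne]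
  apply Submodule.eq_top_of_finrank_eq
  rw [setDim] at h3
  rw [h3]; simp

lemma generic_point (U : Set E3) (hU : IsOpen U) (hne : U.Nonempty) (x : E3) (W : Set E3)
    (hW : W.Finite) : ∃ p ∈ U, ∀ u ∈ W, ∀ w ∈ W, p ∉ affineSpan ℝ ({x, u, w} : Set E3) := by
  by_contra hno
  push Not at hno
  have hsub : U ⊆ ⋃ u ∈ W, ⋃ w ∈ W, (affineSpan ℝ ({x, u, w} : Set E3) : Set E3) := by
    intro p hp
    obtain ⟨u, hu, w, hw, h⟩ := hno p hp
    simp only [mem_iUnion]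
    exact ⟨u, hu, w, hw, h⟩
  have hz : MeasureTheory.volume (⋃ u ∈ W, ⋃ w ∈ W, (affineSpan ℝ ({x, u, w} : Set E3) : Set E3)) = 0 := by
    rw [MeasureTheory.measure_biUnion_null_iff hW.countable]
    intro u _
    rw [MeasureTheory.measure_biUnion_null_iff hW.countable]
    intro w _
    apply MeasureTheory.Measure.addHaar_affineSubspace
    intro htop
    have h1 := finrank_vectorSpan_insert_le_set ℝ ({u, w} : Set E3) x
    have h2 : Module.finrank ℝ (vectorSpan ℝ ({u, w} : Set E3)) ≤ 1 :=
      collinear_iff_finrank_le_one.1 (collinear_pair ℝ u w)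
    rw [← direction_affineSpan, htop, AffineSubspace.direction_top, finrank_top] at h1
    have h3 : Module.finrank ℝ E3 = 3 := by simp
    omega
  have := hU.measure_pos MeasureTheory.volume hne
  have h2 := MeasureTheory.measure_mono_null hsub hz
  rw [h2] at this
  exact lt_irrefl _ this

lemma boundary_point (hP : IsPolytope P) {p x : E3} (hp : p ∈ interior P) (hx : x ∉ P) :
    ∃ t : ℝ, 0 < t ∧ t < 1 ∧ (1 - t) • p + t • x ∈ P ∧ (1 - t) • p + t • x ∉ interior P := by
  let φ : ℝ → E3 := fun t => (1 - t) • p + t • x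
  have hφ : Continuous φ := by fun_prop
  have hK : IsCompact (Icc (0 : ℝ) 1 ∩ φ ⁻¹' P) :=
    isCompact_Icc.inter_right ((poly_compact hP).isClosed.preimage hφ)
  have h0 : φ 0 = p := by simp [φ]
  obtain ⟨t, ht, hmax⟩ := hK.exists_isMaxOn (f := id) ⟨0, by simp, by
    show φ 0 ∈ P
    rw [h0]; exact interior_subset hp⟩ continuous_id.continuousOn
  have ht1 : t < 1 := by
    rcases lt_or_eq_of_le ht.1.2 with h | h
    · exact h
    · exfalso; apply hx
      have := ht.2
      rw [h] at this
      simpa [φ] using this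
  have hni : ∀ s : ℝ, s ∈ Icc (0 : ℝ) 1 → s < 1 → φ s ∈ interior P → ∃ r, s < r ∧ r ∈ Icc (0 : ℝ) 1 ∧ φ r ∈ P := by
    intro s hs hs1 hi
    have h1 : ∀ᶠ r in nhds s, φ r ∈ interior P :=
      (hφ.tendsto s).eventually (isOpen_interior.mem_nhds hi)
    have h2 : ∀ᶠ r in nhds s, r < 1 := eventually_lt_nhds hs1
    have h3 : ∀ᶠ r in nhdsWithin s (Ioi s), φ r ∈ interior P ∧ r < 1 :=
      (h1.and h2).filter_mono nhdsWithin_le_nhds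
    obtain ⟨r, hr, hr2⟩ := (h3.and self_mem_nhdsWithin).exists
    have hr2 : s < r := hr2
    exact ⟨r, hr2, ⟨by linarith [hs.1], hr.2.le⟩, interior_subset hr.1⟩
  have hmx : ∀ r ∈ Icc (0 : ℝ) 1, φ r ∈ P → r ≤ t := fun r hr h => hmax ⟨hr, h⟩
  refine ⟨t, ?_, ht1, ht.2, ?_⟩
  · obtain ⟨r, h1, h2, h3⟩ := hni 0 (by simp) (by simp) (by rw [h0]; exact hp)
    linarith [hmx r h2 h3]
  · intro hi
    obtain ⟨r, h1, h2, h3⟩ := hni t ht.1 ht1 hi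
    linarith [hmx r h2 h3]

lemma hrep (hP : IsPolytope P) (h3 : setDim P = 3)
    (g : Set E3 → E3 →ₗ[ℝ] ℝ) (c : Set E3 → ℝ)
    (hg : ∀ F, IsFacetOf F P → (∀ x ∈ P, c F ≤ g F x) ∧ F = {x ∈ P | g F x = c F})
    (x : E3) (hx : ∀ F, IsFacetOf F P → c F ≤ g F x) : x ∈ P := by
  by_contra hxP
  have hintr := interior_ne hP h3
  obtain ⟨p, hp, hgen⟩ := generic_point _ isOpen_interior hintr x _ (ext_finite hP)
  obtain ⟨t, ht0, ht1, hyP, hyi⟩ := boundary_point hP hp hxP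
  set y := (1 - t) • p + t • x with hy
  obtain ⟨f, hf⟩ := geometric_hahn_banach_open_point (poly_convex hP).interior isOpen_interior hyi
  have hle : ∀ a ∈ P, f a ≤ f y := by
    intro a ha
    apply closure_minimal (fun x hx => le_of_lt (hf x hx)) <| isClosed_Iic.preimage f.continuous
    simpa [(poly_convex hP).closure_interior_eq_closure_of_nonempty_interior hintr] using subset_closure ha
  let f' : E3 →ₗ[ℝ] ℝ := -f.toLinearMap
  have hface : IsFaceOf {z ∈ P | f' z = f' y} P :=
    face_of_support hP f' (f' y) (fun z hz => by simpa [f'] using hle z hz) ⟨y, hyP, rfl⟩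
  set G := {z ∈ P | f' z = f' y} with hG
  have hyG : y ∈ G := ⟨hyP, rfl⟩
  have hpG : p ∉ G := by
    rintro ⟨_, h⟩
    have := hf p hp
    simp [f'] at h
    linarith
  have hf0 : f' ≠ 0 := by
    intro h
    have h1 := hf p hp
    have h2 : f' p = f' y := by rw [h]; rfl
    simp [f'] at h2
    linarith
  have hdim : setDim G ≤ 2 := by
    have h1 := LinearMap.finrank_range_add_finrank_ker f'
    have h2 : LinearMap.range f' = ⊤ := LinearMap.range_eq_top.2 (LinearMap.surjective hf0)
    have hfr : Module.finrank ℝ E3 = 3 := by simp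
    rw [h2, finrank_top, hfr, Module.finrank_self] at h1
    have h3 : vectorSpan ℝ G ≤ LinearMap.ker f' := by
      rw [vectorSpan_def, Submodule.span_le]
      rintro _ ⟨a, ha, b, hb, rfl⟩
      simp only [SetLike.mem_coe, LinearMap.mem_ker, vsub_eq_sub, map_sub, ha.2, hb.2, sub_self]
    have := Submodule.finrank_mono h3
    rw [setDim]; omega
  rcases Nat.lt_or_ge (setDim G) 2 with hlt | hge
  · have hcol : Collinear ℝ G := collinear_of_dim (by omega)
    have hh := face_hull hP hface
    obtain ⟨u, hu⟩ := face_ext hP hface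
    have hyl : ∃ w ∈ P.extremePoints ℝ, y ∈ affineSpan ℝ ({u, w} : Set E3) := by
      by_cases hw : ∃ w ∈ G ∩ P.extremePoints ℝ, w ≠ u
      · obtain ⟨w, hw, hne⟩ := hw
        exact ⟨w, hw.2, hcol.mem_affineSpan_of_mem_of_ne hu.1 hw.1 hyG hne.symm⟩
      · push Not at hw
        refine ⟨u, hu.2, ?_⟩
        have : G ∩ P.extremePoints ℝ = {u} := by
          ext z; exact ⟨fun h => hw z h, fun h => by rw [mem_singleton_iff.1 h]; exact hu⟩
        rw [this, convexHull_singleton] at hh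
        rw [hh] at hyG
        rw [mem_singleton_iff.1 hyG]
        exact subset_affineSpan ℝ _ (by simp)
    obtain ⟨w, hw, hyl⟩ := hyl
    apply hgen u hu.2 w hw
    have m1 : y ∈ affineSpan ℝ ({x, u, w} : Set E3) :=
      affineSpan_mono ℝ (by intro z; simp; tauto) hyl
    have m2 : x ∈ affineSpan ℝ ({x, u, w} : Set E3) := subset_affineSpan ℝ _ (by simp)
    have m3 := AffineMap.lineMap_mem (1 / (1 - t)) m2 m1
    convert m3 using 1
    have : (1 - t) ≠ 0 := by linarith
    rw [AffineMap.lineMap_apply, hy]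
    simp only [vsub_eq_sub, vadd_eq_add]
    rw [show (1 - t) • p + t • x - x = (1 - t) • (p - x) by module, smul_smul,
      one_div, inv_mul_cancel₀ this]
    module
  · have hfac : IsFacetOf G P := ⟨hface, by omega⟩
    obtain ⟨h1, h2⟩ := hg G hfac
    have hgy : g G y = c G := by rw [h2] at hyG; exact hyG.2
    have hgp : c G < g G p := by
      refine lt_of_le_of_ne (h1 p (interior_subset hp)) fun h => hpG ?_
      rw [h2]; exact ⟨interior_subset hp, h.symm⟩
    have hgx := hx G hfac
    rw [hy] at hgy
    simp only [map_add, map_smul, smul_eq_mul] at hgy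
    nlinarith

end Geo

namespace Geo

variable {P F : Set E3}

/-- local coordinates of a polytope at a simple vertex -/
def Loc (P : Set E3) (v : E3) (φ : E3 ≃ₗ[ℝ] (Fin 3 → ℝ)) : Prop :=
  v ∈ P ∧ (∀ x ∈ P, ∀ i, 0 ≤ φ (x - v) i) ∧
    ∀ d, (∀ i, 0 ≤ φ d i) → ∃ ε : ℝ, 0 < ε ∧ v + ε • d ∈ P

lemma loc_exists (hS : IsSimplePolytope3 P) {v : E3} (hv : v ∈ P.extremePoints ℝ) :
    ∃ φ, Loc P v φ := by
  obtain ⟨hP, h3, hsim⟩ := hS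
  have hch : ∀ F : Set E3, ∃ (g : E3 →ₗ[ℝ] ℝ) (c : ℝ), IsFacetOf F P →
      (∀ x ∈ P, c ≤ g x) ∧ F = {x ∈ P | g x = c} := by
    intro F
    by_cases h : IsFacetOf F P
    · obtain ⟨g, c, h1⟩ := facet_support hP h
      exact ⟨g, c, fun _ => h1⟩
    · exact ⟨0, 0, fun h' => absurd h' h⟩
  choose g c hg using hch
  have hvP : v ∈ P := hv.1
  have h33 := hsim v (vertex_iff.2 hv)
  obtain ⟨A, B, D, -, -, -, hABD⟩ := Set.ncard_eq_three.1 h33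
  let L : Fin 3 → Set E3 := ![A, B, D]
  have hL : ∀ i, IsFacetOf (L i) P ∧ v ∈ L i := by
    intro i
    have : L i ∈ ({F | IsFacetOf F P ∧ v ∈ F} : Set (Set E3)) := by
      rw [hABD]
      fin_cases i <;> simp [L]
    exact this
  have hL2 : ∀ F, IsFacetOf F P → v ∈ F → ∃ i, F = L i := by
    intro F h1 h2
    have : F ∈ ({F | IsFacetOf F P ∧ v ∈ F} : Set (Set E3)) := ⟨h1, h2⟩
    rw [hABD] at this
    rcases this with h | h | h
    · exact ⟨0, h⟩
    · exact ⟨1, h⟩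
    · exact ⟨2, h⟩
  have hgv : ∀ i, g (L i) v = c (L i) := by
    intro i
    have h1 := (hg (L i) (hL i).1).2
    have h2 := (hL i).2
    rw [h1] at h2
    exact h2.2
  let ψ : E3 →ₗ[ℝ] (Fin 3 → ℝ) := LinearMap.pi fun i => g (L i)
  have hev : ∀ d, (∀ i, 0 ≤ ψ d i) →
      ∀ᶠ ε : ℝ in nhdsWithin 0 (Ioi 0), v + ε • d ∈ P := by
    intro d hd
    have hfin : {F | IsFacetOf F P}.Finite := (faces_finite hP).subset fun F h => h.1
    have hall : ∀ᶠ ε : ℝ in nhdsWithin 0 (Ioi 0), ∀ F ∈ {F | IsFacetOf F P},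
        c F ≤ g F (v + ε • d) := by
      rw [Filter.eventually_all_finite hfin]
      intro F hF
      by_cases hvF : v ∈ F
      · obtain ⟨i, rfl⟩ := hL2 F hF hvF
        filter_upwards [self_mem_nhdsWithin] with ε hε
        have hε' : (0 : ℝ) < ε := hε
        rw [map_add, map_smul, hgv, smul_eq_mul]
        have : 0 ≤ g (L i) d := hd i
        have := mul_nonneg hε'.le this
        linarith
      · have hlt : c F < g F v := by
          refine lt_of_le_of_ne ((hg F hF).1 v hvP) fun h => hvF ?_
          rw [(hg F hF).2]
          exact ⟨hvP, h.symm⟩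
        have hcont : Continuous fun ε : ℝ => g F (v + ε • d) := by
          have := LinearMap.continuous_of_finiteDimensional (g F)
          fun_prop
        have h0 : ∀ᶠ ε : ℝ in nhds 0, c F < g F (v + ε • d) := by
          apply hcont.continuousAt.eventually_const_lt
          simpa using hlt
        exact (h0.filter_mono nhdsWithin_le_nhds).mono fun _ h => h.le
    filter_upwards [hall] with ε hε
    exact hrep hP h3 g c hg _ fun F hF => hε F hF
  have hinj : Function.Injective ψ := by
    rw [← LinearMap.ker_eq_bot, LinearMap.ker_eq_bot']
    intro d hd
    have h1 := hev d (by intro i; rw [hd]; simp)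
    have h2 := hev (-d) (by intro i; rw [map_neg, hd]; simp)
    obtain ⟨ε, ⟨h1, h2⟩, hε⟩ := ((h1.and h2).and self_mem_nhdsWithin).exists
    have hε' : (0 : ℝ) < ε := hε
    have h := hv.2 h1 h2 ⟨1/2, 1/2, by norm_num, by norm_num, by norm_num, by module⟩
    have : ε • d = 0 := by simpa using h
    exact (smul_eq_zero.1 this).resolve_left hε'.ne'
  let φ : E3 ≃ₗ[ℝ] (Fin 3 → ℝ) :=
    LinearEquiv.ofInjectiveOfFinrankEq ψ hinj (by simp)
  have hφ : ∀ d, φ d = ψ d := fun d => rfl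
  refine ⟨φ, hvP, ?_, ?_⟩
  · intro x hx i
    rw [hφ, map_sub]
    show 0 ≤ g (L i) x - g (L i) v
    have := (hg (L i) (hL i).1).1 x hx
    rw [hgv]; linarith
  · intro d hd
    obtain ⟨ε, h1, hε⟩ := ((hev d hd).and self_mem_nhdsWithin).exists
    exact ⟨ε, hε, h1⟩

/-- the face of the local cone spanned by the coordinate directions in `T` -/
def G (P : Set E3) (v : E3) (φ : E3 ≃ₗ[ℝ] (Fin 3 → ℝ)) (T : Finset (Fin 3)) : Set E3 :=
  {x ∈ P | ∀ i ∉ T, φ (x - v) i = 0}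

variable {v : E3} {φ : E3 ≃ₗ[ℝ] (Fin 3 → ℝ)}

lemma G_mem (hl : Loc P v φ) (T : Finset (Fin 3)) : v ∈ G P v φ T :=
  ⟨hl.1, by simp⟩

lemma G_univ : G P v φ Finset.univ = P := by
  ext x; simp [G]

lemma G_face (hP : IsPolytope P) (hl : Loc P v φ) (T : Finset (Fin 3)) :
    IsFaceOf (G P v φ T) P := by
  let f : E3 →ₗ[ℝ] ℝ := ∑ i ∈ Tᶜ, (LinearMap.proj i).comp φ.toLinearMap
  have hf : ∀ x, f x = ∑ i ∈ Tᶜ, φ x i := by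
    intro x; simp [f]
  have key : G P v φ T = {x ∈ P | f x = f v} := by
    ext x
    simp only [G, mem_setOf_eq]
    refine and_congr_right fun hx => ?_
    have : f x = f v ↔ ∑ i ∈ Tᶜ, φ (x - v) i = 0 := by
      rw [← hf, map_sub, sub_eq_zero]
    rw [this, Finset.sum_eq_zero_iff_of_nonneg fun i _ => hl.2.1 x hx i]
    simp
  rw [key]
  apply face_of_support hP
  · intro x hx
    have : 0 ≤ f (x - v) := by
      rw [hf]; exact Finset.sum_nonneg fun i _ => hl.2.1 x hx i
    rw [map_sub] at this; linarith
  · exact ⟨v, hl.1, rfl⟩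

/-- a point in a coordinate direction -/
lemma G_pt (hl : Loc P v φ) (i : Fin 3) :
    ∃ ε : ℝ, 0 < ε ∧ v + ε • φ.symm (Pi.single i 1) ∈ G P v φ {i} := by
  obtain ⟨ε, hε, h⟩ := hl.2.2 (φ.symm (Pi.single i 1)) (by
    intro j; rw [LinearEquiv.apply_symm_apply, Pi.single_apply]; split_ifs <;> simp)
  refine ⟨ε, hε, h, ?_⟩
  intro j hj
  have hj' : j ≠ i := by simpa using hj
  simp [hj']

lemma G_mono {S T : Finset (Fin 3)} (h : S ⊆ T) : G P v φ S ⊆ G P v φ T :=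
  fun x hx => ⟨hx.1, fun i hi => hx.2 i fun h' => hi (h h')⟩

lemma G_sub (hl : Loc P v φ) {S T : Finset (Fin 3)} : G P v φ S ⊆ G P v φ T ↔ S ⊆ T := by
  refine ⟨fun h i hi => ?_, G_mono⟩
  by_contra hT
  obtain ⟨ε, hε, hx⟩ := G_pt hl i
  have h1 := h (G_mono (by simpa using hi) hx)
  have := h1.2 i hT
  simp at this
  exact hε.ne' this

lemma G_inj (hl : Loc P v φ) {S T : Finset (Fin 3)} (h : G P v φ S = G P v φ T) : S = T :=
  Finset.Subset.antisymm ((G_sub hl).1 h.subset) ((G_sub hl).1 h.superset)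

lemma decomp (φ : E3 ≃ₗ[ℝ] (Fin 3 → ℝ)) (x : E3) :
    x = ∑ i, φ x i • φ.symm (Pi.single i 1) := by
  apply φ.injective
  simp only [map_sum, map_smul, LinearEquiv.apply_symm_apply]
  ext j
  simp [Finset.sum_apply, Pi.single_apply]

lemma G_dim (hl : Loc P v φ) (T : Finset (Fin 3)) : setDim (G P v φ T) = T.card := by
  let b : Fin 3 → E3 := fun i => φ.symm (Pi.single i 1)
  have hb : LinearIndependent ℝ b := by
    have h : LinearIndependent ℝ (fun i : Fin 3 => (Pi.single i 1 : Fin 3 → ℝ)) :=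
      Pi.linearIndependent_single_one (Fin 3) ℝ
    exact h.map' φ.symm.toLinearMap φ.symm.ker
  have hspan : vectorSpan ℝ (G P v φ T) = Submodule.span ℝ (range fun i : T => b i) := by
    rw [vectorSpan_eq_span_vsub_set_right ℝ (G_mem hl T)]
    apply le_antisymm
    · rw [Submodule.span_le]
      rintro _ ⟨x, hx, rfl⟩
      show x - v ∈ _
      rw [decomp φ (x - v)]
      refine Submodule.sum_mem _ fun i _ => ?_
      by_cases hi : i ∈ T
      · exact Submodule.smul_mem _ _ (Submodule.subset_span ⟨⟨i, hi⟩, rfl⟩)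
      · rw [hx.2 i hi, zero_smul]; exact Submodule.zero_mem _
    · rw [Submodule.span_le]
      rintro _ ⟨⟨i, hi⟩, rfl⟩
      obtain ⟨ε, hε, hx⟩ := G_pt hl i
      have hm : ε • b i ∈ Submodule.span ℝ ((fun x => x -ᵥ v) '' G P v φ T) := by
        apply Submodule.subset_span
        exact ⟨_, G_mono (by simpa using hi) hx, by simp [b]⟩
      have := Submodule.smul_mem _ ε⁻¹ hm
      rwa [smul_smul, inv_mul_cancel₀ hε.ne', one_smul] at this
  have hb2 : LinearIndependent ℝ (fun i : T => b i) := hb.comp _ Subtype.val_injective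
  rw [setDim, hspan, finrank_span_eq_card hb2]
  simp

lemma G_all (hl : Loc P v φ) (hP : IsPolytope P) {H : Set E3} (hH : IsFaceOf H P) (hv : v ∈ H) :
    ∃ T, H = G P v φ T := by
  classical
  obtain ⟨-, -, hcv, hex⟩ := hH
  let T : Finset (Fin 3) := Finset.univ.filter fun i => ∃ x ∈ H, 0 < φ (x - v) i
  have hch : ∀ i, ∃ x ∈ H, i ∈ T → 0 < φ (x - v) i := by
    intro i
    by_cases h : i ∈ T
    · obtain ⟨x, hx, h'⟩ := (Finset.mem_filter.1 h).2
      exact ⟨x, hx, fun _ => h'⟩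
    · exact ⟨v, hv, fun h' => absurd h' h⟩
  choose x hxH hx using hch
  refine ⟨T, Subset.antisymm ?_ ?_⟩
  · intro y hy
    refine ⟨hex.subset hy, fun i hi => ?_⟩
    have h0 := hl.2.1 y (hex.subset hy) i
    by_contra hne
    exact hi (Finset.mem_filter.2 ⟨Finset.mem_univ _, y, hy, lt_of_le_of_ne h0 (Ne.symm hne)⟩)
  · intro y hy
    set m : E3 := ∑ i : Fin 3, (1/3 : ℝ) • x i with hm
    have hmH : m ∈ H := hcv.sum_mem (by intros; norm_num) (by simp) fun i _ => hxH i
    have hmv : m - v = ∑ i : Fin 3, (1/3 : ℝ) • (x i - v) := by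
      rw [hm]; simp only [Fin.sum_univ_three]; module
    have hpos : ∀ i ∈ T, 0 < φ (m - v) i := by
      intro i hi
      rw [hmv, map_sum, Finset.sum_apply]
      refine Finset.sum_pos' (fun j _ => ?_) ⟨i, Finset.mem_univ _, ?_⟩
      · rw [map_smul]
        exact mul_nonneg (by norm_num) (hl.2.1 _ (hex.subset (hxH j)) i)
      · rw [map_smul]
        exact mul_pos (by norm_num) (hx i hi)
    have hη : ∃ η : ℝ, 0 < η ∧ ∀ i, 0 ≤ φ ((m - v) - η • (y - v)) i := by
      have : ∀ᶠ η : ℝ in nhdsWithin 0 (Ioi 0), ∀ i, 0 ≤ φ ((m - v) - η • (y - v)) i := by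
        rw [Filter.eventually_all]
        intro i
        by_cases hi : i ∈ T
        · have hcont : Continuous fun η : ℝ => φ ((m - v) - η • (y - v)) i := by
            simp only [map_sub, map_smul, Pi.sub_apply, Pi.smul_apply, smul_eq_mul]
            fun_prop
          have h0 : ∀ᶠ η : ℝ in nhds 0, 0 < φ ((m - v) - η • (y - v)) i := by
            apply hcont.continuousAt.eventually_const_lt
            simpa using hpos i hi
          exact (h0.filter_mono nhdsWithin_le_nhds).mono fun _ h => h.le
        · refine Filter.Eventually.of_forall fun η => ?_
          rw [map_sub, map_smul, Pi.sub_apply, Pi.smul_apply, hy.2 i hi, smul_zero, sub_zero]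
          exact hl.2.1 _ (hex.subset hmH) i
      obtain ⟨η, h, hη⟩ := (this.and self_mem_nhdsWithin).exists
      exact ⟨η, hη, h⟩
    obtain ⟨η, hη, hd⟩ := hη
    obtain ⟨ε, hε, hz⟩ := hl.2.2 _ hd
    -- combine
    by_cases hε1 : ε ≤ 1 + ε * η
    swap
    · push Not at hε1
      -- shrink
      have hz' : v + (1 : ℝ) • ((m - v) - η • (y - v)) ∈ P := by
        have := poly_convex hP hl.1 hz (a := 1 - ε⁻¹) (b := ε⁻¹)
          (by
            have : ε⁻¹ ≤ 1 := by
              apply inv_le_one_of_one_le₀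
              nlinarith [mul_pos hε hη]
            linarith) (by positivity) (by ring)
        convert this using 1
        rw [smul_add, smul_smul, inv_mul_cancel₀ hε.ne']
        module
      have hw : v + (1 / (1 + η)) • (m - v) ∈ H := by
        have h1 : (1 / (1 + η)) ≤ 1 := by
          rw [div_le_one (by positivity)]; linarith
        have := hcv hv hmH (a := 1 - 1 / (1 + η)) (b := 1 / (1 + η)) (by linarith)
          (by positivity) (by ring)
        convert this using 1
        module
      refine hex.right_mem_of_mem_openSegment hz' hy.1 hw
        ⟨1 / (1 + η), η / (1 + η), by positivity, by positivity, by field_simp, ?_⟩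
      have e : η / (1 + η) = 1 - 1 / (1 + η) := by field_simp; ring
      have e2 : (1 / (1 + η)) * η = 1 - 1 / (1 + η) := by field_simp; ring
      rw [e]
      set s := 1 / (1 + η)
      rw [one_smul, smul_add, smul_sub, smul_smul, e2]
      module
    · have hpos2 : 0 < 1 + ε * η := by positivity
      have hw : v + (ε / (1 + ε * η)) • (m - v) ∈ H := by
        have h1 : (ε / (1 + ε * η)) ≤ 1 := by
          rw [div_le_one hpos2]; exact hε1
        have := hcv hv hmH (a := 1 - ε / (1 + ε * η)) (b := ε / (1 + ε * η)) (by linarith)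
          (by positivity) (by ring)
        convert this using 1
        module
      refine hex.right_mem_of_mem_openSegment hz hy.1 hw
        ⟨1 / (1 + ε * η), (ε * η) / (1 + ε * η), by positivity, by positivity, by field_simp, ?_⟩
      have e : (ε * η) / (1 + ε * η) = 1 - 1 / (1 + ε * η) := by field_simp; ring
      have e2 : ε / (1 + ε * η) = (1 / (1 + ε * η)) * ε := by ring
      have e3 : (1 / (1 + ε * η)) * ε * η = 1 - 1 / (1 + ε * η) := by field_simp; ring
      rw [e, e2]
      set s := 1 / (1 + ε * η)
      rw [smul_add, smul_smul, smul_sub, smul_smul, e3]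
      module

end Geo

namespace Geo

variable {P F : Set E3} {v : E3} {φ : E3 ≃ₗ[ℝ] (Fin 3 → ℝ)}

lemma card_sub {α : Type} (p q : α → Prop) [Fintype {x // p x}]
    [DecidablePred fun x : {x // p x} => q x.1] :
    (Finset.univ.filter fun x : {x // p x} => q x.1).card = {x | p x ∧ q x}.ncard := by
  rw [← Set.ncard_coe_finset, ← Set.ncard_image_of_injective _ Subtype.val_injective]
  congr 1
  ext x
  simp [and_comm]

lemma G_edge (hP : IsPolytope P) (hl : Loc P v φ) (i : Fin 3) : IsEdgeOf (G P v φ {i}) P :=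
  ⟨G_face hP hl _, by rw [G_dim hl]; simp⟩

lemma edge_G (hP : IsPolytope P) (hl : Loc P v φ) {e : Set E3} (he : IsEdgeOf e P) (hv : v ∈ e) :
    ∃ i, e = G P v φ {i} := by
  obtain ⟨T, rfl⟩ := G_all hl hP he.1 hv
  have h := he.2
  rw [G_dim hl, Finset.card_eq_one] at h
  obtain ⟨i, rfl⟩ := h
  exact ⟨i, rfl⟩

lemma facet_G (hP : IsPolytope P) (hl : Loc P v φ) {e : Set E3} (he : IsFacetOf e P) (hv : v ∈ e) :
    ∃ T : Finset (Fin 3), T.card = 2 ∧ e = G P v φ T := by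
  obtain ⟨T, rfl⟩ := G_all hl hP he.1 hv
  have h := he.2
  rw [G_dim hl] at h
  exact ⟨T, h, rfl⟩

lemma Gs_inj (hl : Loc P v φ) : Function.Injective fun i : Fin 3 => G P v φ {i} := by
  intro i j h
  simpa using G_inj hl h

lemma ve3 (hP : IsPolytope P) (hl : Loc P v φ) : {e | IsEdgeOf e P ∧ v ∈ e}.ncard = 3 := by
  have : {e | IsEdgeOf e P ∧ v ∈ e} = (fun i : Fin 3 => G P v φ {i}) '' univ := by
    ext e
    constructor
    · rintro ⟨h1, h2⟩
      obtain ⟨i, rfl⟩ := edge_G hP hl h1 h2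
      exact ⟨i, mem_univ _, rfl⟩
    · rintro ⟨i, -, rfl⟩
      exact ⟨G_edge hP hl i, G_mem hl _⟩
  rw [this, Set.ncard_image_of_injective _ (Gs_inj hl), Set.ncard_univ]
  simp

lemma vf2 (hP : IsPolytope P) (hl : Loc P v φ) (hF : IsFacetOf F P) (hv : v ∈ F) :
    {e | IsEdgeOf e P ∧ (v ∈ e ∧ e ⊆ F)}.ncard = 2 := by
  obtain ⟨T, hT, rfl⟩ := facet_G hP hl hF hv
  have : {e | IsEdgeOf e P ∧ (v ∈ e ∧ e ⊆ G P v φ T)} =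
      (fun i : Fin 3 => G P v φ {i}) '' (T : Set (Fin 3)) := by
    ext e
    constructor
    · rintro ⟨h1, h2, h3⟩
      obtain ⟨i, rfl⟩ := edge_G hP hl h1 h2
      rw [G_sub hl] at h3
      exact ⟨i, by simpa using h3, rfl⟩
    · rintro ⟨i, hi, rfl⟩
      exact ⟨G_edge hP hl i, G_mem hl _, (G_sub hl).2 (by simpa using hi)⟩
  rw [this, Set.ncard_image_of_injective _ (Gs_inj hl), Set.ncard_coe_finset, hT]

lemma ef2 (hS : IsSimplePolytope3 P) {e : Set E3} (he : IsEdgeOf e P) :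
    {F | IsFacetOf F P ∧ e ⊆ F}.ncard = 2 := by
  have hP := hS.1
  obtain ⟨v, hve, hv⟩ := face_ext hP he.1
  obtain ⟨φ, hl⟩ := loc_exists hS hv
  obtain ⟨i, rfl⟩ := edge_G hP hl he hve
  have : {F | IsFacetOf F P ∧ G P v φ {i} ⊆ F} = G P v φ ''
      ((Finset.univ.filter fun T : Finset (Fin 3) => T.card = 2 ∧ i ∈ T : Finset _) : Set _) := by
    ext F
    constructor
    · rintro ⟨h1, h2⟩
      obtain ⟨T, hT, rfl⟩ := facet_G hP hl h1 (h2 hve)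
      rw [G_sub hl] at h2
      exact ⟨T, by simp [hT]; simpa using h2, rfl⟩
    · rintro ⟨T, hT, rfl⟩
      simp only [Finset.coe_filter, Finset.mem_univ, true_and, mem_setOf_eq] at hT
      exact ⟨⟨G_face hP hl _, by rw [G_dim hl, hT.1]⟩, (G_sub hl).2 (by simpa using hT.2)⟩
  rw [this, Set.ncard_image_of_injective _ (fun S T h => G_inj hl h), Set.ncard_coe_finset]
  clear this hl hve he
  revert i
  decide

lemma ve2 (hP : IsPolytope P) {e : Set E3} (he : IsEdgeOf e P) :
    {v | v ∈ P.extremePoints ℝ ∧ v ∈ e}.ncard = 2 := by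
  obtain ⟨v, hve, hv⟩ := face_ext hP he.1
  have h2 : ∃ w ∈ e ∩ P.extremePoints ℝ, w ≠ v := by
    by_contra h
    push Not at h
    have h1 : e ∩ P.extremePoints ℝ = {v} := by
      ext w
      exact ⟨fun hw => h w hw, by rintro rfl; exact ⟨hve, hv⟩⟩
    have h3 := face_hull hP he.1
    rw [h1, convexHull_singleton] at h3
    have := he.2
    rw [h3, setDim, vectorSpan_singleton] at this
    simp at this
  obtain ⟨w, ⟨hwe, hw⟩, hwv⟩ := h2
  have key : ∀ x y z : E3, x ∈ P → z ∈ P → y ∈ P.extremePoints ℝ → Wbtw ℝ x y z →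
      x = y ∨ y = z := by
    intro x y z hx hz hy h
    by_contra hne
    push Not at hne
    have hs : Sbtw ℝ x y z := ⟨h, hne.1.symm, hne.2⟩
    have := hs.mem_image_Ioo
    rw [← openSegment_eq_image_lineMap] at this
    exact hne.1 (hy.2 hx hz this)
  have : {v | v ∈ P.extremePoints ℝ ∧ v ∈ e} = {v, w} := by
    ext u
    constructor
    · rintro ⟨hu, hue⟩
      have hc : Collinear ℝ ({u, v, w} : Set E3) := by
        refine (collinear_of_dim he.2.le).subset ?_
        rintro x (rfl | rfl | rfl) <;> assumption
      rcases hc.wbtw_or_wbtw_or_wbtw with h | h | h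
      · rcases key _ _ _ hu.1 hw.1 hv h with h | h
        · exact Or.inl h
        · exact absurd h.symm hwv
      · rcases key _ _ _ hv.1 hu.1 hw h with h | h
        · exact absurd h.symm hwv
        · exact Or.inr h.symm
      · rcases key _ _ _ hw.1 hv.1 hu h with h | h
        · exact Or.inr h.symm
        · exact Or.inl h
    · rintro (rfl | rfl)
      · exact ⟨hv, hve⟩
      · exact ⟨hw, hwe⟩
  rw [this, Set.ncard_pair hwv.symm]

lemma exists_height (hP : IsPolytope P) : ∃ l : E3 →ₗ[ℝ] ℝ, ∀ v ∈ P.extremePoints ℝ,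
    ∀ w ∈ P.extremePoints ℝ, l v = l w → v = w := by
  have hf := ext_finite hP
  let S : Set (E3 × E3) := {p ∈ P.extremePoints ℝ ×ˢ P.extremePoints ℝ | p.1 ≠ p.2}
  have hS : S.Finite := (hf.prod hf).subset fun p hp => hp.1
  have : Finite S := hS
  obtain ⟨l, hl⟩ := Module.exists_dual_forall_apply_ne_zero (K := ℝ) (M := E3)
    (fun p : S => p.1.1 - p.1.2) (fun p => sub_ne_zero.2 p.2.2)
  refine ⟨l, fun v hv w hw h => ?_⟩
  by_contra hne
  apply hl ⟨(v, w), ⟨hv, hw⟩, hne⟩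
  simp [h]

lemma locmin (hP : IsPolytope P) (hl : Loc P v φ) (l : E3 →ₗ[ℝ] ℝ) (T : Finset (Fin 3))
    (h : ∀ i ∈ T, ∀ w ∈ P.extremePoints ℝ, w ∈ G P v φ {i} → l v ≤ l w) :
    ∀ x ∈ G P v φ T, l v ≤ l x := by
  have hb : ∀ i ∈ T, 0 ≤ l (φ.symm (Pi.single i 1)) := by
    intro i hi
    obtain ⟨ε, hε, hx⟩ := G_pt hl i
    have hsub : G P v φ {i} ⊆ {x | l v ≤ l x} := by
      rw [face_hull hP (G_face hP hl {i})]
      refine convexHull_min (fun w hw => h i hi w hw.2 hw.1) ?_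
      exact convex_halfSpace_ge l.isLinear _
    have h1 := hsub hx
    simp only [mem_setOf_eq, map_add, map_smul, smul_eq_mul] at h1
    have h2 : 0 ≤ ε * l (φ.symm (Pi.single i 1)) := by linarith
    exact nonneg_of_mul_nonneg_right h2 hε
  intro x hx
  have : 0 ≤ l (x - v) := by
    rw [decomp φ (x - v), map_sum]
    refine Finset.sum_nonneg fun i _ => ?_
    rw [map_smul, smul_eq_mul]
    by_cases hi : i ∈ T
    · exact mul_nonneg (hl.2.1 x hx.1 i) (hb i hi)
    · rw [hx.2 i hi, zero_mul]
  rw [map_sub] at this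
  linarith

/-- local minima over edges of a facet are minima over the facet -/
lemma facet_min (hS : IsSimplePolytope3 P) (l : E3 →ₗ[ℝ] ℝ) (hv : v ∈ P.extremePoints ℝ)
    (hF : IsFacetOf F P) (hvF : v ∈ F)
    (h : ∀ e, IsEdgeOf e P → v ∈ e → e ⊆ F → ∀ w ∈ P.extremePoints ℝ, w ∈ e → l v ≤ l w) :
    ∀ x ∈ F, l v ≤ l x := by
  obtain ⟨φ, hl⟩ := loc_exists hS hv
  obtain ⟨T, hT, rfl⟩ := facet_G hS.1 hl hF hvF
  apply locmin hS.1 hl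
  intro i hi w hw hwi
  exact h _ (G_edge hS.1 hl i) (G_mem hl _) ((G_sub hl).2 (by simpa using hi)) w hw hwi

lemma poly_min (hS : IsSimplePolytope3 P) (l : E3 →ₗ[ℝ] ℝ) (hv : v ∈ P.extremePoints ℝ)
    (h : ∀ e, IsEdgeOf e P → v ∈ e → ∀ w ∈ P.extremePoints ℝ, w ∈ e → l v ≤ l w) :
    ∀ x ∈ P, l v ≤ l x := by
  obtain ⟨φ, hl⟩ := loc_exists hS hv
  intro x hx
  rw [← G_univ (P := P) (v := v) (φ := φ)] at hx
  refine locmin hS.1 hl l _ ?_ x hx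
  intro i hi w hw hwi
  exact h _ (G_edge hS.1 hl i) (G_mem hl _) w hw hwi

end Geo

section
open scoped Classical
namespace Geo

variable {P : Set E3}

/-- the combinatorial data of a fullerene -/
def mkCell (hS : IsFullerene P) [Fintype {v // v ∈ P.extremePoints ℝ}]
    [Fintype {e // IsEdgeOf e P}] [Fintype {f // IsFacetOf f P}] (l : E3 →ₗ[ℝ] ℝ)
    (hl : ∀ v ∈ P.extremePoints ℝ, ∀ w ∈ P.extremePoints ℝ, l v = l w → v = w) :
    Cell {v // v ∈ P.extremePoints ℝ} {e // IsEdgeOf e P} {f // IsFacetOf f P} where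
  VE v e := v.1 ∈ e.1
  EF e f := e.1 ⊆ f.1
  ht v := l v.1
  inj := fun v w h => Subtype.ext (hl _ v.2 _ w.2 h)
  ve2 := fun e => by
    rw [card_sub (fun v => v ∈ P.extremePoints ℝ) (fun v => v ∈ e.1)]
    exact ve2 hS.1.1 e.2
  ve3 := fun v => by
    obtain ⟨φ, hφ⟩ := loc_exists hS.1 v.2
    rw [card_sub (fun e => IsEdgeOf e P) (fun e => v.1 ∈ e)]
    exact ve3 hS.1.1 hφ
  ef2 := fun e => by
    rw [card_sub (fun f => IsFacetOf f P) (fun f => e.1 ⊆ f)]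
    exact ef2 hS.1 e.2
  vf2 := fun v f h => by
    obtain ⟨e, h1, h2⟩ := h
    obtain ⟨φ, hφ⟩ := loc_exists hS.1 v.2
    rw [card_sub (fun e => IsEdgeOf e P) (fun e => v.1 ∈ e ∧ e ⊆ f.1)]
    exact vf2 hS.1.1 hφ f.2 (h2 h1)
  fne := fun f => by
    obtain ⟨v, hvf, hv⟩ := face_ext hS.1.1 f.2.1
    obtain ⟨φ, hφ⟩ := loc_exists hS.1 hv
    have h := vf2 hS.1.1 hφ f.2 hvf
    obtain ⟨e, he, h1, h2⟩ := Set.nonempty_of_ncard_ne_zero (by rw [h]; norm_num)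
    exact ⟨⟨v, hv⟩, ⟨e, he⟩, h1, h2⟩
  fmin := fun f v w ⟨e, h1, h2⟩ ⟨e', h1', h2'⟩ h h' => by
    apply Subtype.ext
    apply hl _ v.2 _ w.2
    apply le_antisymm
    · exact facet_min hS.1 l v.2 f.2 (h2 h1)
        (fun e he hve hef u hu hue => h ⟨e, he⟩ hve hef ⟨u, hu⟩ hue) _ (h2' h1')
    · exact facet_min hS.1 l w.2 f.2 (h2' h1')
        (fun e he hve hef u hu hue => h' ⟨e, he⟩ hve hef ⟨u, hu⟩ hue) _ (h2 h1)
  fmax := fun f v w ⟨e, h1, h2⟩ ⟨e', h1', h2'⟩ h h' => by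
    apply Subtype.ext
    apply hl _ v.2 _ w.2
    apply le_antisymm
    · have := facet_min hS.1 (-l) w.2 f.2 (h2' h1')
        (fun e he hve hef u hu hue => neg_le_neg (h' ⟨e, he⟩ hve hef ⟨u, hu⟩ hue)) _ (h2 h1)
      exact neg_le_neg_iff.1 this
    · have := facet_min hS.1 (-l) v.2 f.2 (h2 h1)
        (fun e he hve hef u hu hue => neg_le_neg (h ⟨e, he⟩ hve hef ⟨u, hu⟩ hue)) _ (h2' h1')
      exact neg_le_neg_iff.1 this
  vne := by
    have hne : P.Nonempty := (interior_ne hS.1.1 hS.1.2.1).mono interior_subset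
    obtain ⟨v, hv⟩ := (poly_compact hS.1.1).extremePoints_nonempty hne
    exact ⟨⟨v, hv⟩⟩
  vmin := fun v w h h' => by
    apply Subtype.ext
    apply hl _ v.2 _ w.2
    apply le_antisymm
    · exact poly_min hS.1 l v.2
        (fun e he hve u hu hue => h ⟨e, he⟩ hve ⟨u, hu⟩ hue) _ w.2.1
    · exact poly_min hS.1 l w.2
        (fun e he hve u hu hue => h' ⟨e, he⟩ hve ⟨u, hu⟩ hue) _ v.2.1
  vmax := fun v w h h' => by
    apply Subtype.ext
    apply hl _ v.2 _ w.2
    apply le_antisymm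
    · have := poly_min hS.1 (-l) w.2
        (fun e he hve u hu hue => neg_le_neg (h' ⟨e, he⟩ hve ⟨u, hu⟩ hue)) _ v.2.1
      exact neg_le_neg_iff.1 this
    · have := poly_min hS.1 (-l) v.2
        (fun e he hve u hu hue => neg_le_neg (h ⟨e, he⟩ hve ⟨u, hu⟩ hue)) _ w.2.1
      exact neg_le_neg_iff.1 this
  f56 := fun f => by
    rw [card_sub (fun e => IsEdgeOf e P) (fun e => e ⊆ f.1)]
    exact hS.2 f.1 f.2

lemma nxt4 (i : Fin 4) : nxt i = i + 1 := by
  revert i; decide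

lemma main (hS : IsFullerene P) (B : Fin 4 → Set E3) (hB : IsBelt P B) : False := by
  obtain ⟨-, ⟨-, hfac, hedge⟩, -, hb⟩ := hB
  have hedge := hedge (by norm_num)
  have hb := hb le_rfl
  simp only [nxt4] at hedge hb
  have hP := hS.1.1
  have : Fintype {v // v ∈ P.extremePoints ℝ} := (ext_finite hP).fintype
  have : Fintype {e // IsEdgeOf e P} :=
    ((faces_finite hP).subset (fun e h => h.1 : {e | IsEdgeOf e P} ⊆ _)).fintype
  have : Fintype {e // IsFacetOf e P} :=
    ((faces_finite hP).subset (fun e h => h.1 : {e | IsFacetOf e P} ⊆ _)).fintype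
  obtain ⟨l, hl⟩ := exists_height hP
  have hinj : Function.Injective B := by
    intro i j h
    by_contra hne
    have hself : ∀ k, (B k).Nonempty := fun k => (hfac k).1.1
    -- the facet opposite to `i` meets `B j = B i` only if adjacent
    have h1 : ∀ k, k ≠ i → k ≠ j → ((k = i + 1 ∨ i = k + 1) ↔ (k = j + 1 ∨ j = k + 1)) := by
      intro k hki hkj
      rw [← hb i k (Ne.symm hki), ← hb j k (Ne.symm hkj), h]
    have h2 : j = i + 1 ∨ i = j + 1 := by
      rw [← hb i j hne, h, inter_self]; exact hself j
    clear h
    revert i j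
    decide
  refine Cell.no_belt (C := mkCell hS l hl) (fun i => ⟨B i, hfac i⟩)
    (fun i => ⟨B i ∩ B (i + 1), hedge i⟩) ?_ ?_ ?_
  · intro i j h
    exact hinj (congrArg Subtype.val h)
  · intro i g
    have h2 := ef2 hS.1 (hedge i)
    obtain ⟨X, Y, hXY, hset⟩ := Set.ncard_eq_two.1 h2
    have hm : ∀ Z, (IsFacetOf Z P ∧ B i ∩ B (i + 1) ⊆ Z) ↔ Z = X ∨ Z = Y := by
      intro Z
      have := congrArg (Z ∈ ·) hset
      simpa using this
    have hi := (hm (B i)).1 ⟨hfac i, inter_subset_left⟩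
    have hj := (hm (B (i + 1))).1 ⟨hfac _, inter_subset_right⟩
    have hne : B i ≠ B (i + 1) := by
      intro h
      have := hinj h
      revert this
      clear hi hj hm hset h2 h
      revert i
      decide
    have hg := hm g.1
    simp only [Subtype.ext_iff]
    show B i ∩ B (i + 1) ⊆ g.1 ↔ _
    rw [show (B i ∩ B (i + 1) ⊆ g.1) ↔ (IsFacetOf g.1 P ∧ B i ∩ B (i + 1) ⊆ g.1) from
      ⟨fun h => ⟨g.2, h⟩, fun h => h.2⟩, hg]
    rcases hi with hi | hi <;> rcases hj with hj | hj
    · exact absurd (hi.trans hj.symm) hne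
    · rw [hi, hj]
    · rw [hi, hj, or_comm]
    · exact absurd (hi.trans hj.symm) hne
  · intro i j v hvi hvj
    by_contra hne
    have hi : v.1 ∈ B i ∩ B (i + 1) := hvi
    have hj : v.1 ∈ B j ∩ B (j + 1) := hvj
    have key : ∀ p q, p ≠ q → v.1 ∈ B p → v.1 ∈ B q → q = p + 1 ∨ p = q + 1 :=
      fun p q hpq hp hq => (hb p q hpq).1 ⟨_, hp, hq⟩
    have h1 : j = i + 1 ∨ i = j + 1 := key i j hne hi.1 hj.1
    have h2 : i ≠ j + 1 → j + 1 = i + 1 ∨ i = j + 1 + 1 := fun h => key _ _ h hi.1 hj.2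
    have h3 : i + 1 ≠ j → j = i + 1 + 1 ∨ i + 1 = j + 1 := fun h => key _ _ h hi.2 hj.1
    clear hi hj key hvi hvj
    revert i j
    decide

end Geo
end

/-- Fullerenes have no 4-belts. -/
theorem fullerene_no_four_belts (P : Set E3) (hP : IsFullerene P) :
    ∀ B : Fin 4 → Set E3, ¬ IsBelt P B := by
  exact fun B hB => Geo.main hP B hB
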